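/- A discrete group G is C*-simple if and only if the only G-boundary contained in the state space of C*_λ(G) is the singleton {τ_λ}. -/

import Mathlib

noncomputable section
open scoped ENNReal ComplexOrder lp
open MeasureTheory
set_option maxHeartbeats 1000000
set_option synthInstance.maxHeartbeats 1000000

universe u

variable {G : Type u} [Group G]

theorem translat_mem (g : G) (f : ℓ²(G, ℂ)) : Memℓp (fun h => f (g⁻¹ * h)) 2 := by
  have hf : Summable fun i : G => ‖f i‖ ^ (2 : ℝ≥0∞).toReal :=
    (memℓp_gen_iff (by norm_num)).1 (lp.memℓp f)
  exact memℓp_gen ((Equiv.mulLeft g⁻¹).summable_iff.2 hf)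

/-- The left regular representation of `g ∈ G` as a linear isometric bijection of `ℓ²(G)`,
given by `(λ_g ξ)(h) = ξ(g⁻¹ h)`. -/
def lregE (g : G) : ℓ²(G, ℂ) ≃ₗᵢ[ℂ] ℓ²(G, ℂ) :=
{ toFun := fun f => ⟨fun h => f (g⁻¹ * h), translat_mem g f⟩
  invFun := fun f => ⟨fun h => f (g * h), by
    have := translat_mem g⁻¹ f; simpa using! this⟩
  map_add' := by intro f₁ f₂; ext h; simp [lp.coeFn_add]; rfl
  map_smul' := by intro c f; ext h; simp [lp.coeFn_smul]
  left_inv := by intro f; ext h; simp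
  right_inv := by intro f; ext h; simp
  norm_map' := by
    intro f
    rw [lp.norm_eq_tsum_rpow (by norm_num) f, lp.norm_eq_tsum_rpow (by norm_num)]
    congr 1
    exact (Equiv.mulLeft g⁻¹).tsum_eq (fun h => ‖f h‖ ^ (2 : ℝ≥0∞).toReal) }

/-- The left regular representation `λ` as bounded operators on `ℓ²(G)`. -/
def lreg (g : G) : ℓ²(G, ℂ) →L[ℂ] ℓ²(G, ℂ) :=
  (lregE g).toContinuousLinearEquiv.toContinuousLinearMap

variable (G) in
/-- The reduced group C*-algebra `C*_λ(G)`: the norm-closed star subalgebra of the algebra of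
bounded operators on `ℓ²(G)` generated by the image of the left regular representation. -/
def redCstar : StarSubalgebra ℂ (ℓ²(G, ℂ) →L[ℂ] ℓ²(G, ℂ)) :=
  (StarAlgebra.adjoin ℂ (Set.range (lreg (G := G)))).topologicalClosure

/-- `λ_g` as an element of the reduced group C*-algebra. -/
def uu (g : G) : redCstar G :=
  ⟨lreg g, StarSubalgebra.le_topologicalClosure _ (StarAlgebra.subset_adjoin ℂ _ ⟨g, rfl⟩)⟩

variable (G) in
/-- `G` is C*-simple: `C*_λ(G)` has no closed two-sided ideals other than `{0}` and the
whole algebra. -/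
def IsCstarSimple : Prop :=
  ∀ I : TwoSidedIdeal (redCstar G), IsClosed (I : Set (redCstar G)) → I = ⊥ ∨ I = ⊤

/-- The vector `δ_e ∈ ℓ²(G)`. -/
def deltaOne : ℓ²(G, ℂ) := letI := Classical.decEq G; lp.single 2 (1 : G) 1

variable (G) in
/-- The canonical tracial state `τ_λ(a) = ⟨a δ_e, δ_e⟩` on the reduced C*-algebra, as a
weak* continuous linear functional. -/
def tau : WeakDual ℂ (redCstar G) :=
  (innerSL ℂ (deltaOne (G := G))).comp
    ((ContinuousLinearMap.apply ℂ ℓ²(G, ℂ) (deltaOne (G := G))).comp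
      { toLinearMap := (redCstar G).subtype.toLinearMap, cont := continuous_subtype_val })

attribute [irreducible] redCstar lreg lregE deltaOne uu tau

/-- A state on `C*_λ(G)`: a unital positive (continuous) linear functional. -/
def IsState (φ : WeakDual ℂ (redCstar G)) : Prop :=
  φ 1 = 1 ∧ ∀ a : redCstar G, 0 ≤ φ (star a * a)

/-- The action of `G` on the dual of `C*_λ(G)`: `(g·φ)(a) = φ(λ_g⁻¹ a λ_g)`. -/
def dualAct (g : G) (φ : WeakDual ℂ (redCstar G)) : WeakDual ℂ (redCstar G) :=
{ toFun := fun a => φ (uu g⁻¹ * a * uu g)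
  map_add' := by
    intro a b
    show φ (uu g⁻¹ * (a + b) * uu g) = φ (uu g⁻¹ * a * uu g) + φ (uu g⁻¹ * b * uu g)
    rw [mul_add, add_mul, map_add]
  map_smul' := by
    intro c a
    show φ (uu g⁻¹ * (c • a) * uu g) = c • φ (uu g⁻¹ * a * uu g)
    rw [mul_smul_comm, smul_mul_assoc, _root_.map_smul]
  cont := (map_continuous φ).comp
      ((continuous_const.mul continuous_id).mul continuous_const) }

theorem dualAct_continuous (g : G) : Continuous (dualAct (G := G) g) := by
  apply WeakDual.continuous_of_continuous_eval
  intro a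
  exact WeakDual.eval_continuous (uu g⁻¹ * a * uu g)

variable (G) in
/-- A `G`-boundary in the dual space of `C*_λ(G)`: a weak* compact `G`-invariant set of
functionals such that every point mass lies in the weak* closure of the `G`-orbit of every
regular Borel probability measure on it. -/
def IsDualBoundary (B : Set (WeakDual ℂ (redCstar G))) : Prop :=
  B.Nonempty ∧ IsCompact B ∧
  ∃ hinv : ∀ (g : G) (φ : WeakDual ℂ (redCstar G)), φ ∈ B → dualAct g φ ∈ B,
  letI : MeasurableSpace B := borel B
  haveI : BorelSpace B := ⟨rfl⟩
  ∀ (μ : ProbabilityMeasure B) (x : B),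
    (⟨Measure.dirac x, Measure.dirac.isProbabilityMeasure⟩ : ProbabilityMeasure B) ∈
      closure {ν : ProbabilityMeasure B | ∃ g : G,
        ν = μ.map (f := fun y => (⟨dualAct g y.1, hinv g y.1 y.2⟩ : B))
          ((((dualAct_continuous g).comp continuous_subtype_val).subtype_mk
            (fun y => hinv g y.1 y.2)).measurable.aemeasurable)}

/-!
We write means, that is, positive unital functionals on `C(X, ℝ)`, for Radon probability measures.

A closed ideal `I ≠ ⊤` of `C*_λ(G)` is killed by some states, and these form an affine flow. By
Zorn and Krein–Milman the extreme points of a minimal subflow have a boundary as their closure. If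
`{τ}` is the only boundary in the state space, then `τ` kills `I`, and `I = 0` as `τ` is faithful.

Conversely, a boundary other than `{τ}` contains no mean with barycenter `τ`, hence yields a
boundary `Z` of states on `B(ℓ²(G))` none of which restricts to `τ`. Fix `z ∈ Z`. Sampling along the
orbit of `z` represents `C(Z)` by diagonal operators, and by rigidity every point of `Z` restricts
to the evaluation at itself; in particular, points with `z(λ_s) ≠ 0` are fixed by `s`. As `z` is an
invariant mean on `ℓ^∞(G)` for its stabilizer, the stabilizer is amenable, and the theorems of Day
and Hulanicki give a state `ψ` that is trivial on it and extends the evaluation at `z`. Then `ψ`,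
and every vector state of `ψ` with a vector from `C*_λ(G)`, vanishes on `(λ_s - 1) f` for
`f = (z ↦ z(λ_s))`. By simplicity `τ` is a limit of convex combinations of such vector states, so
some extension `ω` of `τ` has the same property, and moving `ω` to `z` along `Z` gives
`0 = -z(λ_s)`. Hence `z` restricts to `τ`, a contradiction.
-/

/-! ### Means and barycenters -/

section WeakTranspose

variable {𝕜 E F : Type*} [CommSemiring 𝕜] [TopologicalSpace 𝕜] [ContinuousAdd 𝕜]
  [ContinuousConstSMul 𝕜 𝕜] [AddCommMonoid E] [Module 𝕜 E] [TopologicalSpace E]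
  [AddCommMonoid F] [Module 𝕜 F] [TopologicalSpace F]

/-- The transpose `φ ↦ φ ∘ L` of a continuous linear map `L`, as a weak* continuous map between
the dual spaces. -/
def weakTranspose (L : E →L[𝕜] F) : WeakDual 𝕜 F →L[𝕜] WeakDual 𝕜 E where
  toFun φ := StrongDual.toWeakDual ((WeakDual.toStrongDual φ).comp L)
  map_add' _ _ := rfl
  map_smul' _ _ := rfl
  cont := WeakDual.continuous_of_continuous_eval fun x => WeakDual.eval_continuous (L x)

@[simp]
theorem weakTranspose_apply (L : E →L[𝕜] F) (φ : WeakDual 𝕜 F) (x : E) :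
    weakTranspose L φ x = φ (L x) :=
  rfl

end WeakTranspose

section Mean

variable {X Y : Type*} [TopologicalSpace X] [TopologicalSpace Y]

/-- A mean on `X`: a positive unital functional on `C(X, ℝ)`. On a compact Hausdorff space these
are the integrals against the Radon probability measures, and they replace them throughout. -/
structure IsMean (ν : WeakDual ℝ C(X, ℝ)) : Prop where
  map_one : ν 1 = 1
  nonneg : ∀ f : C(X, ℝ), 0 ≤ f → 0 ≤ ν f

namespace IsMean

variable {ν : WeakDual ℝ C(X, ℝ)}

theorem mono (hν : IsMean ν) {f g : C(X, ℝ)} (hfg : f ≤ g) : ν f ≤ ν g := by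
  have h := hν.nonneg (g - f) (sub_nonneg.2 hfg)
  rwa [map_sub, sub_nonneg] at h

theorem map_smul_one (hν : IsMean ν) (c : ℝ) : ν (c • 1) = c := by
  rw [map_smul, hν.map_one, smul_eq_mul, mul_one]

theorem abs_map_sub_le (hν : IsMean ν) (f : C(X, ℝ)) (c : ℝ) : |ν f - c| ≤ ν |f - c • 1| := by
  have hsub : ν (f - c • 1) = ν f - c := by rw [map_sub, hν.map_smul_one]
  rw [← hsub, abs_le', ← map_neg]
  exact ⟨hν.mono (le_abs_self _), hν.mono (neg_le_abs _)⟩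

theorem abs_map_le_norm [CompactSpace X] (hν : IsMean ν) (f : C(X, ℝ)) : |ν f| ≤ ‖f‖ := by
  have habs : |f - (0 : ℝ) • 1| ≤ ‖f‖ • (1 : C(X, ℝ)) := fun x => by
    simpa using f.norm_coe_le_norm x
  simpa [hν.map_smul_one] using (hν.abs_map_sub_le f 0).trans (hν.mono habs)

end IsMean

theorem isClosed_setOf_isMean : IsClosed {ν : WeakDual ℝ C(X, ℝ) | IsMean ν} := by
  have hset : {ν : WeakDual ℝ C(X, ℝ) | IsMean ν} =
      {ν | ν 1 = 1} ∩ ⋂ f : C(X, ℝ), ⋂ (_ : 0 ≤ f), {ν | 0 ≤ ν f} := by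
    ext ν
    simp only [Set.mem_inter_iff, Set.mem_iInter]
    exact ⟨fun h => ⟨h.map_one, h.nonneg⟩, fun h => ⟨h.1, h.2⟩⟩
  rw [hset]
  exact (isClosed_eq (WeakDual.eval_continuous _) continuous_const).inter
    (isClosed_iInter fun f => isClosed_iInter fun _ =>
      isClosed_le continuous_const (WeakDual.eval_continuous _))

theorem isCompact_setOf_isMean [CompactSpace X] :
    IsCompact {ν : WeakDual ℝ C(X, ℝ) | IsMean ν} := by
  refine (WeakDual.isCompact_closedBall (𝕜 := ℝ) (0 : StrongDual ℝ C(X, ℝ)) 1).of_isClosed_subset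
    isClosed_setOf_isMean fun ν hν => ?_
  rw [Set.mem_preimage, mem_closedBall_zero_iff]
  exact ContinuousLinearMap.opNorm_le_bound _ zero_le_one fun f => by
    simpa using! hν.abs_map_le_norm f

theorem convex_setOf_isMean : Convex ℝ {ν : WeakDual ℝ C(X, ℝ) | IsMean ν} := by
  intro μ hμ ν hν a b ha hb hab
  refine ⟨?_, fun f hf => ?_⟩
  · change a * μ 1 + b * ν 1 = 1
    rw [hμ.map_one, hν.map_one, mul_one, mul_one, hab]
  · exact add_nonneg (mul_nonneg ha (hμ.nonneg f hf)) (mul_nonneg hb (hν.nonneg f hf))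

/-- Evaluation at a point, the mean given by a point mass. -/
def diracMean (x : X) : WeakDual ℝ C(X, ℝ) :=
  StrongDual.toWeakDual (ContinuousMap.evalCLM ℝ x)

@[simp]
theorem diracMean_apply (x : X) (f : C(X, ℝ)) : diracMean x f = f x :=
  rfl

theorem isMean_diracMean (x : X) : IsMean (diracMean x) :=
  ⟨rfl, fun _ hf => hf x⟩

theorem continuous_diracMean : Continuous (diracMean (X := X)) :=
  WeakDual.continuous_of_continuous_eval fun f => f.continuous

/-- The pushforward of means along a continuous map. -/
def mapMean (σ : C(X, Y)) : WeakDual ℝ C(X, ℝ) →L[ℝ] WeakDual ℝ C(Y, ℝ) :=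
  weakTranspose (ContinuousMap.compCLM ℝ ℝ σ)

theorem IsMean.mapMean {ν : WeakDual ℝ C(X, ℝ)} (hν : IsMean ν) (σ : C(X, Y)) :
    IsMean (mapMean σ ν) :=
  ⟨hν.map_one, fun _ hf => hν.nonneg _ fun x => hf (σ x)⟩

theorem diracMean_mem_closure {S : Set (WeakDual ℝ C(X, ℝ))} (hS : ∀ ν ∈ S, IsMean ν) {x : X}
    (h : ∀ f : C(X, ℝ), 0 ≤ f → f x = 0 → ∃ ν ∈ S, ν f < 1) : diracMean x ∈ closure S := by
  let J := {f : C(X, ℝ) // 0 ≤ f ∧ f x = 0}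
  have : Nonempty J := ⟨⟨0, le_rfl, rfl⟩⟩
  have : IsDirectedOrder J := ⟨fun a b =>
    ⟨⟨a.1 + b.1, add_nonneg a.2.1 b.2.1, by rw [ContinuousMap.add_apply, a.2.2, b.2.2, add_zero]⟩,
      le_add_of_nonneg_right (a := a.1) b.2.1, le_add_of_nonneg_left (a := b.1) a.2.1⟩⟩
  choose ν hνS hν using fun j : J => h j.1 j.2.1 j.2.2
  refine mem_closure_of_tendsto (f := ν) (b := Filter.atTop)
    (tendsto_iff_forall_eval_tendsto_topDualPairing.2 fun f => ?_)
    (Filter.Eventually.of_forall hνS)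
  rw [Metric.tendsto_nhds]
  intro ε hε
  -- `ν j (ε⁻¹ |f - f x|) ≤ ν j j < 1` as soon as `j` dominates `ε⁻¹ |f - f x|`.
  let j₀ : J := ⟨ε⁻¹ • |f - f x • 1|, smul_nonneg (inv_nonneg.2 hε.le) (abs_nonneg _), by simp⟩
  filter_upwards [Filter.eventually_ge_atTop j₀] with j hj
  have hlt : ε⁻¹ * ν j |f - f x • 1| < 1 := by
    rw [← smul_eq_mul, ← map_smul]
    exact ((hS _ (hνS j)).mono hj).trans_lt (hν j)
  rw [inv_mul_lt_one₀ hε] at hlt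
  exact ((hS _ (hνS j)).abs_map_sub_le f (f x)).trans_lt hlt

end Mean

section Barycenter

variable {E : Type*} [AddCommGroup E] [Module ℝ E] [TopologicalSpace E]

/-- The restriction of a continuous linear functional to a set. -/
def restrictDual (X : Set E) (l : E →L[ℝ] ℝ) : C(X, ℝ) :=
  ⟨fun x => l x, l.continuous.comp continuous_subtype_val⟩

/-- The restriction of a continuous linear map to an invariant set. -/
def restrictMap {X : Set E} (T : E →L[ℝ] E) (hT : Set.MapsTo T X X) : C(X, X) :=
  ⟨hT.restrict, T.continuous.restrict hT⟩

/-- `b` is a barycenter of the mean `ν` on `X ⊆ E`: `l b = ∫ l dν` for all functionals `l`. -/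
def IsBarycenter {X : Set E} (ν : WeakDual ℝ C(X, ℝ)) (b : E) : Prop :=
  ∀ l : E →L[ℝ] ℝ, ν (restrictDual X l) = l b

theorem isBarycenter_diracMean {X : Set E} (x : X) : IsBarycenter (diracMean x) (x : E) :=
  fun _ => rfl

theorem IsBarycenter.mapMean {X : Set E} {ν : WeakDual ℝ C(X, ℝ)} {b : E} (hb : IsBarycenter ν b)
    {T : E →L[ℝ] E} (hT : Set.MapsTo T X X) :
    IsBarycenter (mapMean (restrictMap T hT) ν) (T b) :=
  fun l => hb (l.comp T)

theorem isClosed_setOf_isBarycenter {X : Set E} :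
    IsClosed {p : WeakDual ℝ C(X, ℝ) × E | IsBarycenter p.1 p.2} := by
  simp only [IsBarycenter, Set.ofPred_forall]
  exact isClosed_iInter fun l => isClosed_eq
    ((WeakDual.eval_continuous _).comp continuous_fst) (l.continuous.comp continuous_snd)

theorem IsBarycenter.convexComb {X : Set E} {μ ν : WeakDual ℝ C(X, ℝ)} {b c : E}
    (hb : IsBarycenter μ b) (hc : IsBarycenter ν c) (s t : ℝ) :
    IsBarycenter (s • μ + t • ν) (s • b + t • c) := by
  intro l
  change s * μ _ + t * ν _ = _
  rw [hb l, hc l, map_add, map_smul, map_smul, smul_eq_mul, smul_eq_mul]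

theorem map_restrictDual_comp_pi {X : Set E} {ι : Type*} [Finite ι] (ν : WeakDual ℝ C(X, ℝ))
    (l : ι → E →L[ℝ] ℝ) (f : (ι → ℝ) →L[ℝ] ℝ) :
    ν (restrictDual X (f.comp (ContinuousLinearMap.pi l))) =
      f fun i => ν (restrictDual X (l i)) := by
  classical
  have := Fintype.ofFinite ι
  let e : ι → ι → ℝ := fun i j => if i = j then 1 else 0
  have hf : ∀ p, f p = ∑ i, f (e i) * p i := fun p =>
    (LinearMap.pi_apply_eq_sum_univ f.toLinearMap p).trans
      (Finset.sum_congr rfl fun i _ => mul_comm _ _)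
  have hrestr : restrictDual X (f.comp (ContinuousLinearMap.pi l)) =
      ∑ i, f (e i) • restrictDual X (l i) := by
    ext x
    simpa [restrictDual] using hf fun i => l i x
  rw [hrestr, map_sum, hf]
  exact Finset.sum_congr rfl fun i _ => map_smul ν _ _

theorem exists_isBarycenter {K X : Set E} (hK : IsCompact K) (hKc : Convex ℝ K) (hXK : X ⊆ K)
    {ν : WeakDual ℝ C(X, ℝ)} (hν : IsMean ν) : ∃ b ∈ K, IsBarycenter ν b := by
  have hfin : ∀ u : Finset (E →L[ℝ] ℝ),
      (K ∩ ⋂ l ∈ u, {b | ν (restrictDual X l) = l b}).Nonempty := by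
    intro u
    let F : E →L[ℝ] (u → ℝ) := ContinuousLinearMap.pi fun i => i.1
    let p : u → ℝ := fun i => ν (restrictDual X i.1)
    suffices hp : p ∈ F '' K by
      obtain ⟨b, hb, hbp⟩ := hp
      exact ⟨b, hb, Set.mem_iInter₂.2 fun l hl => (congrFun hbp ⟨l, hl⟩).symm⟩
    by_contra hp
    obtain ⟨f, c, hfc, hcp⟩ := geometric_hahn_banach_closed_point
      (hKc.linear_image F.toLinearMap) (hK.image F.continuous).isClosed hp
    have hle : restrictDual X (f.comp F) ≤ c • 1 := fun x => by
      simpa [restrictDual] using (hfc (F x) ⟨x, hXK x.2, rfl⟩).le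
    have hfp := hν.mono hle
    rw [map_restrictDual_comp_pi, hν.map_smul_one] at hfp
    exact hfp.not_gt hcp
  obtain ⟨b, hb, hbl⟩ := hK.inter_iInter_nonempty
    (fun l : E →L[ℝ] ℝ => {b | ν (restrictDual X l) = l b})
    (fun l => isClosed_eq continuous_const l.continuous) hfin
  exact ⟨b, hb, Set.mem_iInter.1 hbl⟩

end Barycenter

section Choquet

variable {E : Type*} [AddCommGroup E] [Module ℝ E] [TopologicalSpace E]
  [IsTopologicalAddGroup E] [ContinuousSMul ℝ E] [LocallyConvexSpace ℝ E] [T2Space E]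

theorem IsBarycenter.eq {X : Set E} {ν : WeakDual ℝ C(X, ℝ)} {b c : E}
    (hb : IsBarycenter ν b) (hc : IsBarycenter ν c) : b = c := by
  by_contra hne
  obtain ⟨l, hl⟩ := geometric_hahn_banach_point_point hne
  exact hl.ne ((hb l).symm.trans (hc l))

theorem IsBarycenter.mem {K X : Set E} (hK : IsCompact K) (hKc : Convex ℝ K) (hXK : X ⊆ K)
    {ν : WeakDual ℝ C(X, ℝ)} (hν : IsMean ν) {b : E} (hb : IsBarycenter ν b) : b ∈ K := by
  obtain ⟨c, hc, hνc⟩ := exists_isBarycenter hK hKc hXK hν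
  rwa [hb.eq hνc]

section Reweight

variable {X : Type*} [TopologicalSpace X] [CompactSpace X]

/-- The conditional mean `k ↦ ν (f * k) / ν f` of `ν` with respect to a density `f`. -/
def reweight (ν : WeakDual ℝ C(X, ℝ)) (f : C(X, ℝ)) : WeakDual ℝ C(X, ℝ) :=
  (ν f)⁻¹ • weakTranspose (ContinuousLinearMap.mul ℝ C(X, ℝ) f) ν

theorem mul_reweight {ν : WeakDual ℝ C(X, ℝ)} {f : C(X, ℝ)} (hf : ν f ≠ 0) (k : C(X, ℝ)) :
    ν f * reweight ν f k = ν (f * k) :=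
  mul_inv_cancel_left₀ hf _

theorem IsMean.reweight {ν : WeakDual ℝ C(X, ℝ)} (hν : IsMean ν) {f : C(X, ℝ)} (hf : 0 ≤ f)
    (hνf : 0 < ν f) : IsMean (reweight ν f) where
  map_one := mul_left_cancel₀ hνf.ne' (by rw [mul_reweight hνf.ne', mul_one, mul_one])
  nonneg k hk := mul_nonneg (inv_nonneg.2 hνf.le) (hν.nonneg _ (mul_nonneg hf hk))

end Reweight

variable {K X : Set E} [CompactSpace X]

-- The barycenters of the reweightings by `f` and `1 - f` form a segment containing `x`.
theorem IsBarycenter.reweight_of_mem_extremePoints (hK : IsCompact K) (hKc : Convex ℝ K)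
    (hXK : X ⊆ K) {ν : WeakDual ℝ C(X, ℝ)} (hν : IsMean ν) {x : E} (hx : x ∈ K.extremePoints ℝ)
    (hb : IsBarycenter ν x) {f : C(X, ℝ)} (hf₀ : 0 ≤ f) (hf₁ : f ≤ 1) (hνf₀ : 0 < ν f)
    (hνf₁ : ν f < 1) : IsBarycenter (reweight ν f) x := by
  have hcompl : ν (1 - f) = 1 - ν f := by rw [map_sub, hν.map_one]
  have hνc : 0 < ν (1 - f) := by rw [hcompl]; exact sub_pos.2 hνf₁
  obtain ⟨b, hbK, hbf⟩ := exists_isBarycenter hK hKc hXK (hν.reweight hf₀ hνf₀)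
  obtain ⟨c, hcK, hcf⟩ := exists_isBarycenter hK hKc hXK (hν.reweight (sub_nonneg.2 hf₁) hνc)
  have hsum : ν f • reweight ν f + ν (1 - f) • reweight ν (1 - f) = ν := by
    refine DFunLike.ext _ _ fun k => ?_
    change ν f * reweight ν f k + ν (1 - f) * reweight ν (1 - f) k = ν k
    rw [mul_reweight hνf₀.ne', mul_reweight hνc.ne', ← map_add, ← add_mul, add_sub_cancel, one_mul]
  have hcomb := hbf.convexComb hcf (ν f) (ν (1 - f))
  rw [hsum] at hcomb
  have hbx : b = x := hx.2 hbK hcK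
    ⟨ν f, ν (1 - f), hνf₀, hνc, by rw [hcompl, add_sub_cancel], hcomb.eq hb⟩
  rwa [← hbx]

theorem IsBarycenter.map_mul_of_mem_extremePoints (hK : IsCompact K) (hKc : Convex ℝ K)
    (hXK : X ⊆ K) {ν : WeakDual ℝ C(X, ℝ)} (hν : IsMean ν) {x : E} (hx : x ∈ K.extremePoints ℝ)
    (hb : IsBarycenter ν x) (f : C(X, ℝ)) (l : E →L[ℝ] ℝ) :
    ν (f * restrictDual X l) = ν f * l x := by
  let M : ℝ := ‖f‖ + 1
  have hM : 0 < M := add_pos_of_nonneg_of_pos (norm_nonneg f) one_pos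
  let F : C(X, ℝ) := (2 * M)⁻¹ • (M • 1 + f)
  have hνF : ν F = (2 * M)⁻¹ * (M + ν f) := by
    rw [map_smul, map_add, hν.map_smul_one, smul_eq_mul]
  have hbounds : ∀ r : ℝ, |r| ≤ ‖f‖ → 0 < (2 * M)⁻¹ * (M + r) ∧ (2 * M)⁻¹ * (M + r) < 1 := by
    intro r hr
    obtain ⟨h₁, h₂⟩ := abs_le.1 hr
    refine ⟨mul_pos (inv_pos.2 (mul_pos two_pos hM)) (by linarith), ?_⟩
    rw [inv_mul_lt_one₀ (mul_pos two_pos hM)]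
    linarith
  have hF : ∀ y, F y = (2 * M)⁻¹ * (M + f y) := fun y => by
    simp only [F, ContinuousMap.smul_apply, ContinuousMap.add_apply, ContinuousMap.one_apply,
      smul_eq_mul, mul_one]
  have hbF : IsBarycenter (reweight ν F) x := by
    refine hb.reweight_of_mem_extremePoints hK hKc hXK hν hx (fun y => ?_) (fun y => ?_) ?_ ?_
    · exact (hbounds _ (f.norm_coe_le_norm y)).1.le.trans_eq (hF y).symm
    · exact (hF y).trans_le (hbounds _ (f.norm_coe_le_norm y)).2.le
    · exact hνF.symm ▸ (hbounds _ (hν.abs_map_le_norm f)).1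
    · exact hνF.symm ▸ (hbounds _ (hν.abs_map_le_norm f)).2
  have hνF₀ : ν F ≠ 0 := hνF.symm ▸ (hbounds _ (hν.abs_map_le_norm f)).1.ne'
  have hmul := mul_reweight hνF₀ (restrictDual X l)
  rw [hbF l, hνF, smul_mul_assoc, add_mul, smul_mul_assoc, one_mul, map_smul, map_add, map_smul,
    hb l, smul_eq_mul, smul_eq_mul, mul_assoc] at hmul
  have hcancel := mul_left_cancel₀ (inv_ne_zero (mul_pos two_pos hM).ne') hmul
  rw [add_mul] at hcancel
  exact (add_left_cancel hcancel).symm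

theorem IsBarycenter.eq_diracMean (hK : IsCompact K) (hKc : Convex ℝ K) (hXK : X ⊆ K)
    {ν : WeakDual ℝ C(X, ℝ)} (hν : IsMean ν) {x : X} (hx : (x : E) ∈ K.extremePoints ℝ)
    (hb : IsBarycenter ν (x : E)) : ν = diracMean x := by
  let A : Subalgebra ℝ C(X, ℝ) :=
    { carrier := {f | ∀ k, ν (k * f) = ν k * f x}
      mul_mem' := fun {a b} ha hb k => by
        rw [← mul_assoc, hb, ha, ContinuousMap.mul_apply, mul_assoc]
      add_mem' := fun {a b} ha hb k => by
        rw [mul_add, map_add, hb, ha, ContinuousMap.add_apply, mul_add]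
      algebraMap_mem' := fun r k => by
        rw [Algebra.algebraMap_eq_smul_one, mul_smul_comm, map_smul, mul_one, smul_eq_mul, mul_comm,
          ContinuousMap.smul_apply, ContinuousMap.one_apply, smul_eq_mul, mul_one] }
  have hA : A.SeparatesPoints := by
    intro y z hyz
    obtain ⟨l, hl⟩ := geometric_hahn_banach_point_point (Subtype.coe_injective.ne hyz)
    have hlA : restrictDual X l ∈ A := fun k =>
      hb.map_mul_of_mem_extremePoints hK hKc hXK hν hx k l
    exact ⟨_, ⟨_, hlA, rfl⟩, hl.ne⟩
  have hclosed : IsClosed {f | ν f = diracMean x f} :=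
    isClosed_eq (map_continuous ν) (map_continuous (diracMean x))
  have hAν : (A : Set C(X, ℝ)) ⊆ {f | ν f = diracMean x f} := fun f hf => by
    simpa [hν.map_one] using hf 1
  refine DFunLike.ext _ _ fun f => closure_minimal hAν hclosed ?_
  rw [← Subalgebra.topologicalClosure_coe,
    ContinuousMap.subalgebra_topologicalClosure_eq_top_of_separatesPoints A hA]
  exact Algebra.mem_top

end Choquet

/-! ### Affine flows and boundaries -/

section AffineFlow

variable {Γ E : Type*} [Group Γ] [AddCommGroup E] [Module ℝ E] [TopologicalSpace E]

/-- A nonempty compact convex subset of `E` that is invariant under the linear action `T`; the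
irreducible affine flows are the minimal ones. -/
structure IsAffineFlow (T : Γ →* (E →L[ℝ] E)) (K : Set E) : Prop where
  nonempty : K.Nonempty
  isCompact : IsCompact K
  convex : Convex ℝ K
  mapsTo : ∀ g, Set.MapsTo (T g) K K

/-- A `Γ`-boundary inside `E`, in terms of means: a nonempty compact invariant set such that every
point mass is a weak* limit of translates of any given mean. -/
structure IsBoundary (T : Γ →* (E →L[ℝ] E)) (X : Set E) : Prop where
  nonempty : X.Nonempty
  isCompact : IsCompact X
  mapsTo : ∀ g, Set.MapsTo (T g) X X
  diracMean_mem : ∀ ν : WeakDual ℝ C(X, ℝ), IsMean ν → ∀ x,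
    diracMean x ∈ closure (Set.range fun g => mapMean (restrictMap (T g) (mapsTo g)) ν)

theorem restrictMap_mul {T : Γ →* (E →L[ℝ] E)} {X : Set E} (hX : ∀ g, Set.MapsTo (T g) X X)
    (g h : Γ) : restrictMap (T (g * h)) (hX (g * h)) =
      (restrictMap (T g) (hX g)).comp (restrictMap (T h) (hX h)) := by
  ext x
  change T (g * h) x = T g (T h x)
  rw [map_mul]
  rfl

theorem restrictMap_one {T : Γ →* (E →L[ℝ] E)} {X : Set E} (hX : ∀ g, Set.MapsTo (T g) X X) :
    restrictMap (T 1) (hX 1) = ContinuousMap.id X := by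
  ext x
  change T 1 x = x
  rw [map_one]
  rfl

theorem IsAffineFlow.mapsTo_extremePoints {T : Γ →* (E →L[ℝ] E)} {K : Set E}
    (hK : IsAffineFlow T K) (g : Γ) :
    Set.MapsTo (T g) (K.extremePoints ℝ) (K.extremePoints ℝ) := by
  have hinv : ∀ g x, T g⁻¹ (T g x) = x := fun g x => by
    rw [← mul_apply_eq_comp, ← map_mul, inv_mul_cancel, map_one]; rfl
  refine fun x hx => ⟨hK.mapsTo g hx.1, fun y hy z hz hyz => ?_⟩
  have hseg : x ∈ openSegment ℝ (T g⁻¹ y) (T g⁻¹ z) := by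
    obtain ⟨a, b, ha, hb, hab, h⟩ := hyz
    exact ⟨a, b, ha, hb, hab, by rw [← map_smul, ← map_smul, ← map_add, h, hinv]⟩
  rw [← hx.2 (hK.mapsTo g⁻¹ hy) (hK.mapsTo g⁻¹ hz) hseg]
  simpa using (hinv g⁻¹ y).symm

theorem IsAffineFlow.exists_minimal [T2Space E] {T : Γ →* (E →L[ℝ] E)} {K : Set E}
    (hK : IsAffineFlow T K) : ∃ L ⊆ K, Minimal (IsAffineFlow T) L := by
  obtain ⟨L, hLK, hL⟩ := zorn_superset_nonempty {L | IsAffineFlow T L} (fun c hc hchain hcne => by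
    refine ⟨⋂₀ c, ⟨?_, ?_, ?_, ?_⟩, fun s hs => Set.sInter_subset_of_mem hs⟩
    · have := hcne.to_subtype
      rw [Set.sInter_eq_iInter]
      exact IsCompact.nonempty_iInter_of_directed_nonempty_isCompact_isClosed _
        (fun a b => (hchain.total a.2 b.2).elim (fun h => ⟨a, subset_rfl, h⟩)
          fun h => ⟨b, h, subset_rfl⟩) (fun i => (hc i.2).nonempty)
        (fun i => (hc i.2).isCompact) (fun i => (hc i.2).isCompact.isClosed)
    · obtain ⟨s, hs⟩ := hcne
      exact (hc hs).isCompact.of_isClosed_subset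
        (isClosed_sInter fun t ht => (hc ht).isCompact.isClosed) (Set.sInter_subset_of_mem hs)
    · exact convex_sInter fun t ht => (hc ht).convex
    · exact fun g x hx t ht => (hc ht).mapsTo g (hx t ht)) K hK
  exact ⟨L, hLK, hL⟩

variable [IsTopologicalAddGroup E] [ContinuousSMul ℝ E] [LocallyConvexSpace ℝ E] [T2Space E]

theorem IsAffineFlow.setOf_isBarycenter {T : Γ →* (E →L[ℝ] E)} {K X : Set E} (hK : IsCompact K)
    (hKc : Convex ℝ K) (hXK : X ⊆ K) (hX : ∀ g, Set.MapsTo (T g) X X)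
    {Q : Set (WeakDual ℝ C(X, ℝ))} (hQ : ∀ ν ∈ Q, IsMean ν) (hQne : Q.Nonempty)
    (hQcpt : IsCompact Q) (hQc : Convex ℝ Q)
    (hQT : ∀ g, Set.MapsTo (mapMean (restrictMap (T g) (hX g))) Q Q) :
    IsAffineFlow T {b | ∃ ν ∈ Q, IsBarycenter ν b} where
  nonempty := by
    obtain ⟨ν, hν⟩ := hQne
    obtain ⟨b, -, hb⟩ := exists_isBarycenter hK hKc hXK (hQ ν hν)
    exact ⟨b, ν, hν, hb⟩
  isCompact := by
    have himage : {b | ∃ ν ∈ Q, IsBarycenter ν b} =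
        Prod.snd '' (Q ×ˢ K ∩ {p : WeakDual ℝ C(X, ℝ) × E | IsBarycenter p.1 p.2}) := by
      ext b
      constructor
      · rintro ⟨ν, hν, hb⟩
        exact ⟨(ν, b), ⟨⟨hν, hb.mem hK hKc hXK (hQ ν hν)⟩, hb⟩, rfl⟩
      · rintro ⟨⟨ν, c⟩, ⟨⟨hν, -⟩, hc⟩, rfl⟩
        exact ⟨ν, hν, hc⟩
    rw [himage]
    exact ((hQcpt.prod hK).inter_right isClosed_setOf_isBarycenter).image continuous_snd
  convex := by
    rintro b ⟨μ, hμ, hb⟩ c ⟨ν, hν, hc⟩ s t hs ht hst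
    exact ⟨_, hQc hμ hν hs ht hst, hb.convexComb hc s t⟩
  mapsTo := by
    rintro g b ⟨ν, hν, hb⟩
    exact ⟨_, hQT g hν, hb.mapMean (hX g)⟩

-- Otherwise some `f ≥ 0` vanishing at `x` has mean at least `1` along the orbit of `ν`. The means
-- with this property form an affine flow, so by minimality one of them has barycenter `x` and is
-- therefore the point mass at `x`.
theorem diracMean_mem_closure_range_mapMean {T : Γ →* (E →L[ℝ] E)} {K X : Set E} [CompactSpace X]
    (hK : Minimal (IsAffineFlow T) K) (hXK : X ⊆ K) (hX : ∀ g, Set.MapsTo (T g) X X)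
    {ν : WeakDual ℝ C(X, ℝ)} (hν : IsMean ν) {x : X} (hx : (x : E) ∈ K.extremePoints ℝ) :
    diracMean x ∈ closure (Set.range fun g => mapMean (restrictMap (T g) (hX g)) ν) := by
  have hKcpt := hK.prop.isCompact
  have hKc := hK.prop.convex
  refine diracMean_mem_closure (Set.forall_mem_range.2 fun g => hν.mapMean _) fun f _ hfx => ?_
  by_contra! hle
  rw [Set.forall_mem_range] at hle
  let Q : Set (WeakDual ℝ C(X, ℝ)) :=
    {μ | IsMean μ} ∩ ⋂ g, {μ | 1 ≤ mapMean (restrictMap (T g) (hX g)) μ f}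
  have hQflow : IsAffineFlow T {b | ∃ μ ∈ Q, IsBarycenter μ b} := by
    refine .setOf_isBarycenter hKcpt hKc hXK hX (fun μ hμ => hμ.1) ⟨ν, hν, Set.mem_iInter.2 hle⟩
      (isCompact_setOf_isMean.inter_right ?_) (convex_setOf_isMean.inter ?_) fun g μ hμ => ?_
    · exact isClosed_iInter fun g => isClosed_le continuous_const (WeakDual.eval_continuous _)
    · refine convex_iInter fun g μ₁ h₁ μ₂ h₂ s t hs ht hst => ?_
      exact (convex_Ici (1 : ℝ)) h₁ h₂ hs ht hst
    · refine ⟨hμ.1.mapMean _, Set.mem_iInter.2 fun h => ?_⟩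
      have hhg : 1 ≤ mapMean (restrictMap (T (h * g)) (hX (h * g))) μ f := Set.mem_iInter.1 hμ.2 _
      rwa [restrictMap_mul hX] at hhg
  have hQK : {b | ∃ μ ∈ Q, IsBarycenter μ b} ⊆ K := fun b ⟨μ, hμ, hb⟩ =>
    hb.mem hKcpt hKc hXK hμ.1
  obtain ⟨μ, hμ, hμx⟩ := hK.le_of_le hQflow hQK (hXK x.2)
  have hge : 1 ≤ mapMean (restrictMap (T 1) (hX 1)) μ f := Set.mem_iInter.1 hμ.2 1
  rw [restrictMap_one hX, hμx.eq_diracMean hKcpt hKc hXK hμ.1 hx] at hge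
  change 1 ≤ f x at hge
  exact not_lt_of_ge hge (hfx.trans_lt one_pos)

/-- Glasner's theorem on irreducible affine flows. -/
theorem isBoundary_closure_extremePoints {T : Γ →* (E →L[ℝ] E)} {K : Set E}
    (hK : Minimal (IsAffineFlow T) K) : IsBoundary T (closure (K.extremePoints ℝ)) := by
  have hKcpt := hK.prop.isCompact
  have hsub : closure (K.extremePoints ℝ) ⊆ K :=
    closure_minimal extremePoints_subset hKcpt.isClosed
  have hcpt : IsCompact (closure (K.extremePoints ℝ)) :=
    hKcpt.of_isClosed_subset isClosed_closure hsub
  have : CompactSpace (closure (K.extremePoints ℝ)) := isCompact_iff_compactSpace.1 hcpt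
  have hinv (g) : Set.MapsTo (T g) (closure (K.extremePoints ℝ)) (closure (K.extremePoints ℝ)) :=
    (hK.prop.mapsTo_extremePoints g).closure (T g).continuous
  refine ⟨(hKcpt.extremePoints_nonempty hK.prop.nonempty).closure, hcpt, hinv, fun ν hν => ?_⟩
  have hdense : Dense {x : closure (K.extremePoints ℝ) | (x : E) ∈ K.extremePoints ℝ} :=
    Subtype.dense_iff.2 (closure_mono fun y hy => ⟨⟨y, subset_closure hy⟩, hy, rfl⟩)
  have hclosed := (isClosed_closure (s := Set.range fun g =>
    mapMean (restrictMap (T g) (hinv g)) ν)).preimage continuous_diracMean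
  exact fun x => closure_minimal
    (fun y hy => diracMean_mem_closure_range_mapMean hK hsub hinv hν hy) hclosed (hdense x)

theorem IsAffineFlow.exists_isBoundary_subset {T : Γ →* (E →L[ℝ] E)} {K : Set E}
    (hK : IsAffineFlow T K) : ∃ X ⊆ K, IsBoundary T X := by
  obtain ⟨L, hLK, hL⟩ := hK.exists_minimal
  exact ⟨_, (closure_minimal extremePoints_subset hL.prop.isCompact.isClosed).trans hLK,
    isBoundary_closure_extremePoints hL⟩

theorem IsBoundary.eq_singleton {T : Γ →* (E →L[ℝ] E)} {X : Set E} (hX : IsBoundary T X)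
    {ν : WeakDual ℝ C(X, ℝ)} (hν : IsMean ν) {b : E} (hb : IsBarycenter ν b)
    (hTb : ∀ g, T g b = b) : X = {b} := by
  refine Set.eq_singleton_iff_nonempty_unique_mem.2 ⟨hX.nonempty, fun x hx => ?_⟩
  have hclosed : IsClosed {μ : WeakDual ℝ C(X, ℝ) | IsBarycenter μ b} :=
    isClosed_setOf_isBarycenter.preimage (continuous_id.prodMk continuous_const)
  have horbit : Set.range (fun g => mapMean (restrictMap (T g) (hX.mapsTo g)) ν) ⊆
      {μ | IsBarycenter μ b} :=
    Set.range_subset_iff.2 fun g => by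
      simpa only [Set.mem_ofPred_eq, hTb] using hb.mapMean (hX.mapsTo g)
  exact (isBarycenter_diracMean ⟨x, hx⟩).eq
    (closure_minimal horbit hclosed (hX.diracMean_mem ν hν ⟨x, hx⟩))

end AffineFlow

/-! ### States -/

section State

variable {A : Type*} [CStarAlgebra A]

/-- A state on a unital C*-algebra; on the reduced group C*-algebra this is `IsState`. -/
def IsCStarState (φ : WeakDual ℂ A) : Prop :=
  φ 1 = 1 ∧ ∀ a : A, 0 ≤ φ (star a * a)

namespace IsCStarState

section Order

variable [PartialOrder A] [StarOrderedRing A] {φ : WeakDual ℂ A}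

theorem nonneg (hφ : IsCStarState φ) {a : A} (ha : 0 ≤ a) : 0 ≤ φ a := by
  obtain ⟨b, rfl⟩ := CStarAlgebra.nonneg_iff_eq_star_mul_self.1 ha
  exact hφ.2 b

/-- A state as a positive linear map, giving access to the GNS seminorm. -/
def toPositiveLinearMap (hφ : IsCStarState φ) : A →ₚ[ℂ] ℂ :=
  PositiveLinearMap.mk₀ (WeakDual.toStrongDual φ : A →ₗ[ℂ] ℂ) fun _ => hφ.nonneg

end Order

variable {φ : WeakDual ℂ A}

theorem map_star (hφ : IsCStarState φ) (a : A) : φ (star a) = star (φ a) := by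
  let := CStarAlgebra.spectralOrder A
  have := CStarAlgebra.spectralOrderedRing A
  exact StarHomClass.map_star hφ.toPositiveLinearMap a

theorem re_nonneg (hφ : IsCStarState φ) (a : A) : 0 ≤ (φ (star a * a)).re :=
  (Complex.le_def.1 (hφ.2 a)).1

theorem cauchy_schwarz (hφ : IsCStarState φ) (a b : A) :
    ‖φ (star a * b)‖ ^ 2 ≤ (φ (star a * a)).re * (φ (star b * b)).re := by
  let := CStarAlgebra.spectralOrder A
  have := CStarAlgebra.spectralOrderedRing A
  let f := hφ.toPositiveLinearMap
  have hsq : ∀ c, ‖f.toPreGNS c‖ ^ 2 = (φ (star c * c)).re := fun c =>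
    Real.sq_sqrt (hφ.re_nonneg c)
  rw [← hsq, ← hsq, ← mul_pow]
  exact pow_le_pow_left₀ (norm_nonneg _)
    (norm_inner_le_norm (𝕜 := ℂ) (f.toPreGNS a) (f.toPreGNS b)) 2

theorem re_map_star_mul_self_le (hφ : IsCStarState φ) (a : A) :
    (φ (star a * a)).re ≤ ‖a‖ ^ 2 := by
  let := CStarAlgebra.spectralOrder A
  have := CStarAlgebra.spectralOrderedRing A
  have h : ‖φ (star a * a)‖ ≤ ‖φ 1‖ * ‖star a * a‖ :=
    hφ.toPositiveLinearMap.norm_apply_le_of_nonneg _ (star_mul_self_nonneg a)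
  rw [hφ.1, norm_one, one_mul, CStarRing.norm_star_mul_self, ← sq] at h
  exact (Complex.re_le_norm _).trans h

theorem norm_map_le (hφ : IsCStarState φ) (a : A) : ‖φ a‖ ≤ ‖a‖ := by
  have h := hφ.cauchy_schwarz 1 a
  rw [star_one, one_mul, one_mul, hφ.1, Complex.one_re, one_mul] at h
  exact le_of_sq_le_sq (h.trans (hφ.re_map_star_mul_self_le a)) (norm_nonneg _)

end IsCStarState

theorem norm_add_I_smul_one_sq_le {a : A} (ha : IsSelfAdjoint a) (t : ℝ) :
    ‖a + (t * Complex.I) • (1 : A)‖ ^ 2 ≤ ‖a‖ ^ 2 + t ^ 2 := by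
  have hstar : star (a + (t * Complex.I) • (1 : A)) * (a + (t * Complex.I) • 1) =
      a * a + ((t : ℂ) ^ 2) • 1 := by
    have hconj : star (t * Complex.I) = -(t * Complex.I) := by simp
    have hsq : t * Complex.I * (t * Complex.I) = -(t : ℂ) ^ 2 := by
      rw [mul_mul_mul_comm, Complex.I_mul_I, mul_neg_one, sq]
    rw [star_add, star_smul, star_one, ha.star_eq, hconj, neg_smul, ← sub_eq_add_neg,
      ← ((Commute.one_right a).smul_right _).mul_self_sub_mul_self_eq', smul_mul_smul_comm, hsq,
      mul_one, neg_smul, sub_neg_eq_add]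
  rw [sq, ← CStarRing.norm_star_mul_self, hstar]
  refine (norm_add_le _ _).trans (add_le_add ((norm_mul_le a a).trans_eq (sq _).symm) ?_)
  rw [← Complex.ofReal_pow, norm_smul, Complex.norm_real, Real.norm_of_nonneg (sq_nonneg t)]
  exact mul_le_of_le_one_right (sq_nonneg t) (by
    cases subsingleton_or_nontrivial A
    · simp [Subsingleton.elim (1 : A) 0]
    · exact CStarRing.norm_one.le)

theorem im_map_eq_zero_of_contractive {φ : WeakDual ℂ A} (hφ₁ : φ 1 = 1)
    (hφ : ∀ a, ‖φ a‖ ≤ ‖a‖) {a : A} (ha : IsSelfAdjoint a) : (φ a).im = 0 := by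
  have hsq : ∀ t : ℝ, ((φ a).im + t) ^ 2 ≤ ‖a‖ ^ 2 + t ^ 2 := fun t => by
    have him : (φ (a + (t * Complex.I) • 1)).im = (φ a).im + t := by simp [hφ₁]
    rw [← him, ← sq_abs]
    exact (pow_le_pow_left₀ (abs_nonneg _) ((Complex.abs_im_le_norm _).trans (hφ _)) 2).trans
      (norm_add_I_smul_one_sq_le ha t)
  by_contra hne
  have h := hsq ((‖a‖ ^ 2 + 1) / (2 * (φ a).im))
  have hcross : (φ a).im * ((‖a‖ ^ 2 + 1) / (2 * (φ a).im)) = (‖a‖ ^ 2 + 1) / 2 := by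
    field_simp
  nlinarith [sq_nonneg (φ a).im]

theorem re_map_nonneg_of_contractive [PartialOrder A] [StarOrderedRing A] {φ : WeakDual ℂ A}
    (hφ₁ : φ 1 = 1) (hφ : ∀ a, ‖φ a‖ ≤ ‖a‖) {a : A} (ha : 0 ≤ a) : 0 ≤ (φ a).re := by
  have hscalar : algebraMap ℝ A ‖a‖ = (‖a‖ : ℂ) • (1 : A) := by
    rw [Algebra.algebraMap_eq_smul_one, Complex.coe_smul]
  have hle : ‖algebraMap ℝ A ‖a‖ - a‖ ≤ ‖a‖ := by
    refine (CStarAlgebra.norm_le_norm_of_nonneg_of_le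
      (sub_nonneg.2 (IsSelfAdjoint.of_nonneg ha).le_algebraMap_norm_self)
      (sub_le_self _ ha)).trans ?_
    cases subsingleton_or_nontrivial A
    · simp [Subsingleton.elim (algebraMap ℝ A ‖a‖) 0]
    · rw [norm_algebraMap', norm_norm]
  have h := (Complex.re_le_norm _).trans ((hφ _).trans hle)
  rw [map_sub, hscalar, map_smul, hφ₁, smul_eq_mul, mul_one, Complex.sub_re,
    Complex.ofReal_re] at h
  linarith

theorem IsCStarState.of_contractive {φ : WeakDual ℂ A} (hφ₁ : φ 1 = 1) (hφ : ∀ a, ‖φ a‖ ≤ ‖a‖) :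
    IsCStarState φ := by
  let := CStarAlgebra.spectralOrder A
  have := CStarAlgebra.spectralOrderedRing A
  exact ⟨hφ₁, fun a => Complex.le_def.2
    ⟨re_map_nonneg_of_contractive hφ₁ hφ (star_mul_self_nonneg a),
      (im_map_eq_zero_of_contractive hφ₁ hφ (.star_mul_self a)).symm⟩⟩

theorem isCompact_setOf_isCStarState : IsCompact {φ : WeakDual ℂ A | IsCStarState φ} := by
  refine (WeakDual.isCompact_closedBall (𝕜 := ℂ) (0 : StrongDual ℂ A) 1).of_isClosed_subset
    ?_ fun φ hφ => ?_
  · simp only [IsCStarState, Set.ofPred_and, Set.ofPred_forall]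
    exact (isClosed_eq (WeakDual.eval_continuous _) continuous_const).inter
      (isClosed_iInter fun a => isClosed_le continuous_const (WeakDual.eval_continuous _))
  · rw [Set.mem_preimage, mem_closedBall_zero_iff]
    exact ContinuousLinearMap.opNorm_le_bound _ zero_le_one fun a => by
      simpa using! IsCStarState.norm_map_le hφ a

-- Without this shortcut, the real structure is sometimes found through `Module.complexToReal`.
instance : Module ℝ (WeakDual ℂ A) :=
  WeakDual.instModule' ℝ

instance : LocallyConvexSpace ℝ (WeakDual ℂ A) :=
  inferInstanceAs (LocallyConvexSpace ℝ (WeakBilin (topDualPairing ℂ A)))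

instance : IsScalarTower ℝ ℂ (WeakDual ℂ A) :=
  inferInstanceAs (IsScalarTower ℝ ℂ (StrongDual ℂ A))

theorem convex_setOf_isCStarState : Convex ℝ {φ : WeakDual ℂ A | IsCStarState φ} := by
  intro φ hφ ψ hψ s t hs ht hst
  refine ⟨?_, fun a => add_nonneg (smul_nonneg hs (hφ.2 a)) (smul_nonneg ht (hψ.2 a))⟩
  change s • φ 1 + t • ψ 1 = 1
  rw [hφ.1, hψ.1, ← add_smul, hst, one_smul]

end State

section Conjugation

variable {A : Type*} [CStarAlgebra A]

/-- The action of `Γ` on the dual of `A` by conjugation with a unitary representation `u`. -/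
def conjHom {Γ : Type*} [Group Γ] (u : Γ →* unitary A) :
    Γ →* (WeakDual ℂ A →L[ℝ] WeakDual ℂ A) where
  toFun g := (weakTranspose
    (ContinuousLinearMap.mulLeftRight ℂ A (star (u g : A)) (u g))).restrictScalars ℝ
  map_one' := by
    refine ContinuousLinearMap.ext fun φ => DFunLike.ext _ _ fun a => ?_
    simp
  map_mul' g h := by
    refine ContinuousLinearMap.ext fun φ => DFunLike.ext _ _ fun a => ?_
    simp [mul_assoc]

variable {Γ : Type*} [Group Γ] (u : Γ →* unitary A)

@[simp]
theorem conjHom_apply (g : Γ) (φ : WeakDual ℂ A) (a : A) :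
    conjHom u g φ a = φ (star (u g : A) * a * u g) :=
  rfl

theorem mapsTo_conjHom_setOf_isCStarState (g : Γ) :
    Set.MapsTo (conjHom u g) {φ | IsCStarState φ} {φ | IsCStarState φ} := by
  refine fun φ hφ => ⟨by simpa using hφ.1, fun a => ?_⟩
  have h := hφ.2 (a * u g)
  rwa [star_mul, mul_assoc, ← mul_assoc (star a), ← mul_assoc, ← conjHom_apply] at h

end Conjugation

/-! ### The reduced C*-algebra -/

section RegularRepresentation

theorem lreg_apply (g : G) (f : ℓ²(G, ℂ)) (h : G) : lreg g f h = f (g⁻¹ * h) := by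
  unfold lreg lregE
  rfl

theorem lreg_one : lreg (1 : G) = 1 := by
  ext f h
  rw [lreg_apply, inv_one, one_mul, one_apply_eq_self]

theorem lreg_mul (g k : G) : lreg (g * k) = lreg g * lreg k := by
  ext f h
  rw [lreg_apply, mul_apply_eq_comp, lreg_apply, lreg_apply, mul_inv_rev, mul_assoc]

theorem star_lreg (g : G) : star (lreg g) = lreg g⁻¹ := by
  rw [ContinuousLinearMap.star_eq_adjoint, eq_comm, ContinuousLinearMap.eq_adjoint_iff]
  intro x y
  rw [lp.inner_eq_tsum, lp.inner_eq_tsum,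
    ← (Equiv.mulLeft g).tsum_eq fun h => inner ℂ (x h) (lreg g y h)]
  exact tsum_congr fun h => by
    rw [Equiv.coe_mulLeft, lreg_apply, lreg_apply, inv_inv, inv_mul_cancel_left]

/-- The left regular representation as a unitary representation. -/
def regularRep : G →* unitary (ℓ²(G, ℂ) →L[ℂ] ℓ²(G, ℂ)) where
  toFun g := ⟨lreg g, by
    rw [Unitary.mem_iff, star_lreg, ← lreg_mul, ← lreg_mul, inv_mul_cancel, mul_inv_cancel,
      lreg_one]
    exact ⟨rfl, rfl⟩⟩
  map_one' := Subtype.ext lreg_one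
  map_mul' g k := Subtype.ext (lreg_mul g k)

@[simp]
theorem coe_regularRep (g : G) : (regularRep g : ℓ²(G, ℂ) →L[ℂ] ℓ²(G, ℂ)) = lreg g :=
  rfl

open Classical in
/-- The point mass `δ_k ∈ ℓ²(ι)`. -/
def delta {ι : Type*} (k : ι) : ℓ²(ι, ℂ) :=
  lp.single 2 k 1

open Classical in
theorem delta_apply {ι : Type*} (k h : ι) : delta k h = if h = k then 1 else 0 := by
  simp [delta, Pi.single_apply]

theorem deltaOne_eq : deltaOne (G := G) = delta 1 := by
  unfold deltaOne
  rfl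

open Classical in
theorem lreg_delta (g k : G) : lreg g (delta k) = delta (g * k) := by
  ext h
  rw [lreg_apply, delta_apply, delta_apply]
  exact if_congr inv_mul_eq_iff_eq_mul rfl rfl

theorem inner_delta {ι : Type*} (k : ι) (f : ℓ²(ι, ℂ)) : inner ℂ (delta k) f = f k := by
  classical
  rw [delta, lp.inner_single_left, RCLike.inner_apply, map_one, mul_one]

theorem eq_of_forall_delta {ι : Type*} {S T : ℓ²(ι, ℂ) →L[ℂ] ℓ²(ι, ℂ)}
    (h : ∀ k, S (delta k) = T (delta k)) : S = T := by
  classical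
  ext1 f
  have hsingle : ∀ k : ι, lp.single 2 k (f k) = f k • delta k := fun k => by
    rw [delta, ← lp.single_smul, smul_eq_mul, mul_one]
  have hf := lp.hasSum_single (p := 2) (by norm_num) f
  refine (hf.mapL S).unique ?_
  convert hf.mapL T using 2 with k
  rw [hsingle, map_smul, map_smul, h]

theorem isClosed_redCstar : IsClosed (redCstar G : Set (ℓ²(G, ℂ) →L[ℂ] ℓ²(G, ℂ))) := by
  unfold redCstar
  exact StarSubalgebra.isClosed_topologicalClosure _

-- Scoped, so that the theorem finds the topology of `redCstar G` through `StarSubalgebra`.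
namespace redCstar

scoped instance : CStarAlgebra (redCstar G) :=
  StarSubalgebra.cstarAlgebra (redCstar G) (h_closed := isClosed_redCstar)

end redCstar

open scoped redCstar

theorem coe_uu (g : G) : (uu g : ℓ²(G, ℂ) →L[ℂ] ℓ²(G, ℂ)) = lreg g := by
  unfold uu
  rfl

theorem uu_one : uu (1 : G) = 1 :=
  Subtype.ext ((coe_uu 1).trans lreg_one)

theorem uu_mul (g k : G) : uu (g * k) = uu g * uu k :=
  Subtype.ext (by rw [MulMemClass.coe_mul, coe_uu, coe_uu, coe_uu, lreg_mul])

theorem star_uu (g : G) : star (uu g) = uu g⁻¹ :=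
  Subtype.ext (by rw [StarMemClass.coe_star, coe_uu, coe_uu, star_lreg])

/-- The unitary representation `g ↦ λ_g` of `G` in its reduced C*-algebra. -/
def reducedRep : G →* unitary (redCstar G) where
  toFun g := ⟨uu g, by
    rw [Unitary.mem_iff, star_uu, ← uu_mul, ← uu_mul, inv_mul_cancel, mul_inv_cancel, uu_one]
    exact ⟨rfl, rfl⟩⟩
  map_one' := Subtype.ext uu_one
  map_mul' g k := Subtype.ext (uu_mul g k)

@[simp]
theorem coe_reducedRep (g : G) : (reducedRep g : redCstar G) = uu g :=
  rfl

theorem adjoin_range_lreg : (StarAlgebra.adjoin ℂ (Set.range (lreg (G := G))) :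
    Set (ℓ²(G, ℂ) →L[ℂ] ℓ²(G, ℂ))) = Submodule.span ℂ (Set.range (lreg (G := G))) := by
  let M : Submonoid (ℓ²(G, ℂ) →L[ℂ] ℓ²(G, ℂ)) :=
    MonoidHom.mrange ((unitary (ℓ²(G, ℂ) →L[ℂ] ℓ²(G, ℂ))).subtype.comp regularRep)
  have hstar : star (Set.range (lreg (G := G))) ⊆ Set.range lreg := by
    rintro x ⟨g, hg⟩
    exact ⟨g⁻¹, by rw [← star_lreg, hg, star_star]⟩
  have hclosure : (Submonoid.closure (Set.range (lreg (G := G))) :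
      Set (ℓ²(G, ℂ) →L[ℂ] ℓ²(G, ℂ))) = Set.range lreg :=
    congrArg SetLike.coe (Submonoid.closure_eq M)
  have hspan := StarAlgebra.adjoin_eq_span (R := ℂ) (Set.range (lreg (G := G)))
  rw [Set.union_eq_left.2 hstar, hclosure] at hspan
  exact congrArg SetLike.coe hspan

theorem mem_of_forall_uu_mem (V : Submodule ℂ (redCstar G)) (hV : IsClosed (V : Set (redCstar G)))
    (h : ∀ g, uu g ∈ V) (a : redCstar G) : a ∈ V := by
  have hspan : Submodule.span ℂ (Set.range (lreg (G := G))) ≤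
      V.map (redCstar G).subtype.toLinearMap := by
    rw [Submodule.span_le]
    rintro _ ⟨g, rfl⟩
    exact ⟨uu g, h g, coe_uu g⟩
  have hclosed : IsClosed ((V.map (redCstar G).subtype.toLinearMap : Submodule ℂ _) :
      Set (ℓ²(G, ℂ) →L[ℂ] ℓ²(G, ℂ))) :=
    isClosed_redCstar.isClosedEmbedding_subtypeVal.isClosedMap _ hV
  have ha : (a : ℓ²(G, ℂ) →L[ℂ] ℓ²(G, ℂ)) ∈
      closure (Submodule.span ℂ (Set.range (lreg (G := G))) : Set _) := by
    rw [← adjoin_range_lreg, ← StarSubalgebra.topologicalClosure_coe]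
    have hmem := a.2
    unfold redCstar at hmem
    exact hmem
  obtain ⟨b, hb, hba⟩ := closure_minimal hspan hclosed ha
  rwa [← Subtype.ext hba]

theorem eq_of_forall_uu {φ ψ : WeakDual ℂ (redCstar G)} (h : ∀ g, φ (uu g) = ψ (uu g)) :
    φ = ψ := by
  let V : Submodule ℂ (redCstar G) := LinearMap.eqLocus
    (WeakDual.toStrongDual φ : redCstar G →ₗ[ℂ] ℂ) (WeakDual.toStrongDual ψ : redCstar G →ₗ[ℂ] ℂ)
  exact DFunLike.ext _ _ fun a =>
    mem_of_forall_uu_mem V (isClosed_eq (map_continuous φ) (map_continuous ψ)) h a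

end RegularRepresentation

section Trace

open scoped redCstar

theorem tau_apply (a : redCstar G) :
    tau G a = inner ℂ (delta 1) ((a : ℓ²(G, ℂ) →L[ℂ] ℓ²(G, ℂ)) (delta 1)) := by
  rw [← deltaOne_eq]
  unfold tau
  rfl

open Classical in
theorem tau_uu (g : G) : tau G (uu g) = if g = 1 then 1 else 0 := by
  rw [tau_apply, coe_uu, lreg_delta, inner_delta, delta_apply, mul_one]
  simp only [eq_comm]

theorem tau_star_mul_self (a : redCstar G) :
    tau G (star a * a) =
      ((‖(a : ℓ²(G, ℂ) →L[ℂ] ℓ²(G, ℂ)) (delta 1)‖ ^ 2 : ℝ) : ℂ) := by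
  rw [tau_apply, MulMemClass.coe_mul, StarMemClass.coe_star, mul_apply_eq_comp,
    ContinuousLinearMap.star_eq_adjoint, ContinuousLinearMap.adjoint_inner_right,
    inner_self_eq_norm_sq_to_K]
  exact (Complex.ofReal_pow _ 2).symm

theorem isCStarState_tau : IsCStarState (tau G) := by
  refine ⟨?_, fun a => ?_⟩
  · rw [← uu_one, tau_uu, if_pos rfl]
  · rw [tau_star_mul_self]
    exact Complex.zero_le_real.2 (sq_nonneg _)

open Classical in
theorem conjHom_reducedRep_tau (g : G) : conjHom reducedRep g (tau G) = tau G := by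
  refine eq_of_forall_uu fun k => ?_
  rw [conjHom_apply, coe_reducedRep, star_uu, ← uu_mul, ← uu_mul, tau_uu, tau_uu]
  refine if_congr ?_ rfl rfl
  rw [mul_assoc, inv_mul_eq_one, right_eq_mul]

theorem eq_zero_of_tau_star_mul_self {a : redCstar G} (h : tau G (star a * a) = 0) : a = 0 := by
  refine Subtype.ext (eq_of_forall_delta fun k => ?_)
  have hk : tau G (star (a * uu k) * (a * uu k)) = 0 := by
    rw [← conjHom_reducedRep_tau k, conjHom_apply] at h
    rw [← h, coe_reducedRep, star_mul]
    simp only [mul_assoc]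
  rw [tau_star_mul_self] at hk
  have hnorm := norm_eq_zero.1 (pow_eq_zero_iff two_ne_zero |>.1 (Complex.ofReal_eq_zero.1 hk))
  rwa [MulMemClass.coe_mul, mul_apply_eq_comp, coe_uu, lreg_delta, mul_one] at hnorm

end Trace

/-! ### Boundaries in terms of measures -/

section RadonMeasures

open scoped CompactlySupported

variable {X Y : Type*} [TopologicalSpace X] [CompactSpace X] [MeasurableSpace X] [BorelSpace X]

/-- The mean `f ↦ ∫ f dμ` associated with a probability measure `μ`. -/
def integralMean (μ : ProbabilityMeasure X) : WeakDual ℝ C(X, ℝ) :=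
  StrongDual.toWeakDual (LinearMap.mkContinuous
    { toFun := fun f => ∫ x, f x ∂(μ : Measure X)
      map_add' := fun f g => integral_add
        ((BoundedContinuousFunction.mkOfCompact f).integrable _)
        ((BoundedContinuousFunction.mkOfCompact g).integrable _)
      map_smul' := fun c f => integral_const_mul c f } 1 fun f => by
        simpa [mul_comm] using norm_integral_le_of_norm_le_const (μ := (μ : Measure X))
          (Filter.Eventually.of_forall fun x => f.norm_coe_le_norm x))

@[simp]
theorem integralMean_apply (μ : ProbabilityMeasure X) (f : C(X, ℝ)) :
    integralMean μ f = ∫ x, f x ∂(μ : Measure X) :=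
  rfl

theorem isMean_integralMean (μ : ProbabilityMeasure X) : IsMean (integralMean μ) :=
  ⟨by simp, fun _ hf => integral_nonneg hf⟩

theorem integralMean_diracProba (x : X) : integralMean (diracProba x) = diracMean x :=
  DFunLike.ext _ _ fun f => integral_dirac' _ _ f.continuous.stronglyMeasurable

theorem integralMean_map [TopologicalSpace Y] [CompactSpace Y] [MeasurableSpace Y] [BorelSpace Y]
    (μ : ProbabilityMeasure X) (σ : C(X, Y)) :
    integralMean (μ.map σ.continuous.measurable.aemeasurable) = mapMean σ (integralMean μ) :=
  DFunLike.ext _ _ fun f => integral_map σ.continuous.measurable.aemeasurable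
    f.continuous.stronglyMeasurable.aestronglyMeasurable

theorem isInducing_integralMean : Topology.IsInducing (integralMean (X := X)) := by
  refine Topology.isInducing_iff_nhds.2 fun μ => eq_of_forall_le_iff fun l => ?_
  rw [← Filter.tendsto_id', ProbabilityMeasure.tendsto_iff_forall_integral_tendsto,
    ← Filter.tendsto_iff_comap, tendsto_iff_forall_eval_tendsto_topDualPairing]
  exact (ContinuousMap.equivBoundedOfCompact X ℝ).surjective.forall

theorem diracProba_mem_closure_iff {ι : Type*} (μ : ProbabilityMeasure X) (σ : ι → C(X, X))
    (x : X) : diracProba x ∈ closure {ν : ProbabilityMeasure X |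
        ∃ i, ν = μ.map (σ i).continuous.measurable.aemeasurable} ↔
      diracMean x ∈ closure (Set.range fun i => mapMean (σ i) (integralMean μ)) := by
  rw [isInducing_integralMean.closure_eq_preimage_closure_image, Set.mem_preimage,
    integralMean_diracProba]
  have himage : integralMean '' {ν : ProbabilityMeasure X |
      ∃ i, ν = μ.map (σ i).continuous.measurable.aemeasurable} =
        Set.range fun i => mapMean (σ i) (integralMean μ) := by
    ext ν
    constructor
    · rintro ⟨_, ⟨i, rfl⟩, rfl⟩
      exact ⟨i, (integralMean_map μ (σ i)).symm⟩
    · rintro ⟨i, rfl⟩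
      exact ⟨_, ⟨i, rfl⟩, integralMean_map μ (σ i)⟩
  rw [himage]

theorem IsMean.exists_integralMean_eq [T2Space X] {ν : WeakDual ℝ C(X, ℝ)} (hν : IsMean ν) :
    ∃ μ : ProbabilityMeasure X, integralMean μ = ν := by
  let Λ : C_c(X, ℝ) →ₚ[ℝ] ℝ :=
    { toFun := fun f => ν f.toContinuousMap
      map_add' := fun f g => map_add ν f.toContinuousMap g.toContinuousMap
      map_smul' := fun c f => map_smul ν c f.toContinuousMap
      monotone' := fun f g h => hν.mono h }
  have hΛ : ∀ f : C(X, ℝ), ∫ x, f x ∂(RealRMK.rieszMeasure Λ) = ν f := fun f =>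
    RealRMK.integral_rieszMeasure Λ ⟨f, HasCompactSupport.of_compactSpace _⟩
  have hone : (RealRMK.rieszMeasure Λ).real Set.univ = 1 := by
    simpa [hν.map_one] using hΛ 1
  rw [Measure.real, ENNReal.toReal_eq_one_iff] at hone
  exact ⟨⟨RealRMK.rieszMeasure Λ, ⟨hone⟩⟩, DFunLike.ext _ _ hΛ⟩

end RadonMeasures

theorem isBoundary_iff_diracProba {Γ E : Type*} [Group Γ] [AddCommGroup E] [Module ℝ E]
    [TopologicalSpace E] [T2Space E] {T : Γ →* (E →L[ℝ] E)} {S : Γ → E → E}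
    (hST : ∀ g x, S g x = T g x) (hS : ∀ g, Continuous (S g)) {X : Set E} :
    IsBoundary T X ↔ X.Nonempty ∧ IsCompact X ∧ ∃ hinv : ∀ g, ∀ x, x ∈ X → S g x ∈ X,
      letI : MeasurableSpace X := borel X
      haveI : BorelSpace X := ⟨rfl⟩
      ∀ (μ : ProbabilityMeasure X) (x : X), diracProba x ∈
        closure {ν : ProbabilityMeasure X | ∃ g, ν = μ.map
          (f := fun y => (⟨S g y.1, hinv g y.1 y.2⟩ : X))
          (((hS g).comp continuous_subtype_val).subtype_mk
            fun y => hinv g y.1 y.2).measurable.aemeasurable} := by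
  obtain rfl : S = fun g => ⇑(T g) := funext fun g => funext (hST g)
  let : MeasurableSpace X := borel X
  have : BorelSpace X := ⟨rfl⟩
  constructor
  · intro hX
    have := isCompact_iff_compactSpace.1 hX.isCompact
    exact ⟨hX.nonempty, hX.isCompact, fun g x hx => hX.mapsTo g hx, fun μ x =>
      (diracProba_mem_closure_iff μ (fun g => restrictMap (T g) (hX.mapsTo g)) x).2
        (hX.diracMean_mem _ (isMean_integralMean μ) x)⟩
  · rintro ⟨hne, hcpt, hinv, hcl⟩
    have := isCompact_iff_compactSpace.1 hcpt
    refine ⟨hne, hcpt, fun g x hx => hinv g x hx, fun ν hν x => ?_⟩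
    obtain ⟨μ, rfl⟩ := hν.exists_integralMean_eq
    exact (diracProba_mem_closure_iff μ (fun g => restrictMap (T g) fun x hx => hinv g x hx) x).1
      (hcl μ x)

section DualBoundary

open scoped redCstar

theorem dualAct_eq_conjHom (g : G) (φ : WeakDual ℂ (redCstar G)) :
    dualAct g φ = conjHom reducedRep g φ := by
  refine DFunLike.ext _ _ fun a => ?_
  change φ (uu g⁻¹ * a * uu g) = φ (star (uu g) * a * uu g)
  rw [star_uu]

theorem isDualBoundary_iff {X : Set (WeakDual ℂ (redCstar G))} :
    IsDualBoundary G X ↔ IsBoundary (conjHom reducedRep) X := by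
  have h := isBoundary_iff_diracProba (T := conjHom reducedRep) (X := X) dualAct_eq_conjHom
    dualAct_continuous
  exact h.symm

end DualBoundary

section IdealStates

variable {A : Type*} [CStarAlgebra A]

theorem exists_isCStarState_forall_mem_eq_zero (V : Submodule ℂ A) (hV : IsClosed (V : Set A))
    (hunit : ∀ a ∈ V, ¬IsUnit a) : ∃ φ : WeakDual ℂ A, IsCStarState φ ∧ ∀ a ∈ V, φ a = 0 := by
  have : Nontrivial A := ⟨1, 0, fun h => hunit 1 (h ▸ V.zero_mem) isUnit_one⟩
  have : IsClosed (V : Set A) := hV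
  -- An element of `V` at distance less than `1` from `1` would be invertible.
  have hnorm : ‖(Submodule.Quotient.mk 1 : A ⧸ V)‖ = 1 := by
    refine le_antisymm ((Submodule.Quotient.norm_mk_le V 1).trans_eq CStarRing.norm_one) ?_
    by_contra! hlt
    obtain ⟨m, hm, hm₁⟩ := Submodule.Quotient.norm_mk_lt (S := V)
      (Submodule.Quotient.mk 1 : A ⧸ V) (sub_pos.2 hlt)
    rw [add_sub_cancel] at hm₁
    exact hunit (1 - m) ((Submodule.Quotient.eq V).1 hm.symm) (isUnit_one_sub_of_norm_lt_one hm₁)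
  obtain ⟨f, hf, hf₁⟩ := exists_dual_vector ℂ (Submodule.Quotient.mk 1 : A ⧸ V)
    (by rw [hnorm]; exact one_ne_zero)
  let φ : A →L[ℂ] ℂ := (f.toLinearMap.comp V.mkQ).mkContinuous 1 fun a =>
    (f.le_opNorm _).trans
      (mul_le_mul hf.le (Submodule.Quotient.norm_mk_le V a) (norm_nonneg _) zero_le_one)
  refine ⟨StrongDual.toWeakDual φ, .of_contractive ?_ fun a => ?_, fun a ha => ?_⟩
  · exact hf₁.trans (by rw [hnorm]; rfl)
  · exact (φ.le_of_opNorm_le (LinearMap.mkContinuous_norm_le _ zero_le_one _) a).trans_eq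
      (one_mul _)
  · change f (Submodule.Quotient.mk a) = 0
    rw [(Submodule.Quotient.mk_eq_zero V).2 ha, map_zero]

theorem isAffineFlow_states_vanishing_on_ideal {Γ : Type*} [Group Γ] (u : Γ →* unitary A)
    {I : TwoSidedIdeal A} (hI : IsClosed (I : Set A)) (hI_ne : I ≠ ⊤) :
    IsAffineFlow (conjHom u) {φ | IsCStarState φ ∧ ∀ a ∈ I, φ a = 0} where
  nonempty := by
    refine exists_isCStarState_forall_mem_eq_zero (I.asIdeal.restrictScalars ℂ) hI fun a ha hu => ?_
    have htop : I.asIdeal = ⊤ := Ideal.eq_top_of_isUnit_mem _ ha hu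
    exact hI_ne (eq_top_iff.2 fun x _ => TwoSidedIdeal.mem_asIdeal.1 (htop ▸ Submodule.mem_top))
  isCompact := by
    simp only [Set.ofPred_and, Set.ofPred_forall]
    exact isCompact_setOf_isCStarState.inter_right (isClosed_iInter fun a =>
      isClosed_iInter fun _ => isClosed_eq (WeakDual.eval_continuous a) continuous_const)
  convex := fun φ hφ ψ hψ s t hs ht hst =>
    ⟨convex_setOf_isCStarState hφ.1 hψ.1 hs ht hst, fun a ha => by
      change s • φ a + t • ψ a = 0
      rw [hφ.2 a ha, hψ.2 a ha, smul_zero, smul_zero, add_zero]⟩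
  mapsTo g φ hφ := ⟨mapsTo_conjHom_setOf_isCStarState u g hφ.1, fun a ha =>
    hφ.2 _ (I.mul_mem_right _ _ (I.mul_mem_left _ _ ha))⟩

end IdealStates

open scoped redCstar in
theorem isCstarSimple_of_unique_boundary (h : ∀ B : Set (WeakDual ℂ (redCstar G)),
    B ⊆ {φ | IsState φ} → IsDualBoundary G B → B = {tau G}) : IsCstarSimple G := by
  refine fun I hI => or_iff_not_imp_right.2 fun hI_ne => ?_
  obtain ⟨X, hXK, hX⟩ :=
    (isAffineFlow_states_vanishing_on_ideal reducedRep hI hI_ne).exists_isBoundary_subset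
  have hXτ := h X (fun φ hφ => (hXK hφ).1) (isDualBoundary_iff.2 hX)
  have hτ : ∀ a ∈ I, tau G a = 0 := (hXK (hXτ ▸ Set.mem_singleton (tau G))).2
  refine eq_bot_iff.2 fun a ha => (TwoSidedIdeal.mem_bot _).2 ?_
  exact eq_zero_of_tau_star_mul_self (hτ _ (I.mul_mem_left _ _ ha))

/-! ### Boundaries of extensions of states -/

section Extension

open scoped CStarAlgebra

variable {A B : Type*} [CStarAlgebra A] [CStarAlgebra B]

/-- The restriction of functionals along a *-homomorphism, for instance along the inclusion of a
subalgebra. -/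
def dualRestrict (j : A →⋆ₐ[ℂ] B) : WeakDual ℂ B →L[ℝ] WeakDual ℂ A :=
  (weakTranspose (⟨j.toAlgHom.toLinearMap, map_continuous j⟩ : A →L[ℂ] B)).restrictScalars ℝ

@[simp]
theorem dualRestrict_apply (j : A →⋆ₐ[ℂ] B) (φ : WeakDual ℂ B) (a : A) :
    dualRestrict j φ a = φ (j a) :=
  rfl

variable {j : A →⋆ₐ[ℂ] B}

theorem IsCStarState.dualRestrict {φ : WeakDual ℂ B} (hφ : IsCStarState φ) :
    IsCStarState (dualRestrict j φ) :=
  ⟨by simp [hφ.1], fun a => by simpa [StarHomClass.map_star] using hφ.2 (j a)⟩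

theorem IsCStarState.exists_dualRestrict_eq (hj : Function.Injective j) {φ : WeakDual ℂ A}
    (hφ : IsCStarState φ) : ∃ ψ : WeakDual ℂ B, IsCStarState ψ ∧ _root_.dualRestrict j ψ = φ := by
  let e : A ≃ₗ[ℂ] LinearMap.range (j : A →ₗ[ℂ] B) := LinearEquiv.ofInjective (j : A →ₗ[ℂ] B) hj
  have hnorm : ∀ y, ‖φ (e.symm y)‖ ≤ 1 * ‖y‖ := fun y => by
    obtain ⟨a, rfl⟩ := e.surjective y
    rw [e.symm_apply_apply, one_mul]
    exact (hφ.norm_map_le a).trans_eq (NonUnitalStarAlgHom.norm_map j hj a).symm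
  obtain ⟨ψ, hψφ, hψ⟩ := exists_extension_norm_eq (LinearMap.range (j : A →ₗ[ℂ] B))
    (((WeakDual.toStrongDual φ : A →ₗ[ℂ] ℂ).comp e.symm.toLinearMap).mkContinuous 1 hnorm)
  have hext : ∀ a, ψ (j a) = φ a := fun a =>
    (hψφ (e a)).trans (congrArg φ (e.symm_apply_apply a))
  have hψ₁ : ‖ψ‖ ≤ 1 := hψ.trans_le (LinearMap.mkContinuous_norm_le _ zero_le_one _)
  refine ⟨StrongDual.toWeakDual ψ, .of_contractive ?_ fun b => ?_, DFunLike.ext _ _ hext⟩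
  · have h1 := hext 1
    rwa [map_one, hφ.1] at h1
  · exact (ψ.le_of_opNorm_le hψ₁ b).trans_eq (one_mul _)

variable {Γ : Type*} [Group Γ] {u : Γ →* unitary A} {v : Γ →* unitary B}

theorem dualRestrict_conjHom (huv : ∀ g, j (u g) = v g) (g : Γ) (φ : WeakDual ℂ B) :
    dualRestrict j (conjHom v g φ) = conjHom u g (dualRestrict j φ) :=
  DFunLike.ext _ _ fun a => by simp [huv, StarHomClass.map_star]

theorem IsAffineFlow.state_extensions (hj : Function.Injective j) (huv : ∀ g, j (u g) = v g)
    {K : Set (WeakDual ℂ A)} (hK : IsAffineFlow (conjHom u) K) (hKs : ∀ φ ∈ K, IsCStarState φ) :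
    IsAffineFlow (conjHom v) {ψ | IsCStarState ψ ∧ dualRestrict j ψ ∈ K} where
  nonempty := by
    obtain ⟨φ, hφ⟩ := hK.nonempty
    obtain ⟨ψ, hψ, rfl⟩ := (hKs φ hφ).exists_dualRestrict_eq hj
    exact ⟨ψ, hψ, hφ⟩
  isCompact := isCompact_setOf_isCStarState.inter_right
    (hK.isCompact.isClosed.preimage (dualRestrict j).continuous)
  convex := convex_setOf_isCStarState.inter
    (hK.convex.linear_preimage (dualRestrict j).toLinearMap)
  mapsTo g ψ hψ := ⟨mapsTo_conjHom_setOf_isCStarState v g hψ.1, by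
    rw [dualRestrict_conjHom huv]
    exact hK.mapsTo g hψ.2⟩

theorem IsBoundary.exists_isBoundary_dualRestrict_ne (hj : Function.Injective j)
    (huv : ∀ g, j (u g) = v g) {X : Set (WeakDual ℂ A)} (hX : IsBoundary (conjHom u) X)
    (hXs : ∀ φ ∈ X, IsCStarState φ) {τ : WeakDual ℂ A} (hτ : ∀ g, conjHom u g τ = τ)
    (hne : X ≠ {τ}) : ∃ Z : Set (WeakDual ℂ B), IsBoundary (conjHom v) Z ∧
      ∀ z ∈ Z, IsCStarState z ∧ dualRestrict j z ≠ τ := by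
  have := isCompact_iff_compactSpace.1 hX.isCompact
  have hflow := IsAffineFlow.setOf_isBarycenter isCompact_setOf_isCStarState
    convex_setOf_isCStarState hXs hX.mapsTo (Q := {ν | IsMean ν}) (fun ν hν => hν)
    (hX.nonempty.elim fun x hx => ⟨diracMean ⟨x, hx⟩, isMean_diracMean _⟩)
    isCompact_setOf_isMean convex_setOf_isMean (fun g ν hν => IsMean.mapMean hν _)
  obtain ⟨Z, hZK, hZ⟩ := (hflow.state_extensions hj huv fun φ ⟨ν, hν, hφ⟩ =>
    hφ.mem isCompact_setOf_isCStarState convex_setOf_isCStarState hXs hν).exists_isBoundary_subset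
  refine ⟨Z, hZ, fun z hz => ⟨(hZK hz).1, fun hzτ => ?_⟩⟩
  obtain ⟨ν, hν, hb⟩ := (hZK hz).2
  exact hne (hX.eq_singleton hν (hzτ ▸ hb) hτ)

end Extension

section Rigidity

variable {Γ E : Type*} [Group Γ] [AddCommGroup E] [Module ℝ E] [TopologicalSpace E]
  [IsTopologicalAddGroup E] [ContinuousSMul ℝ E] [LocallyConvexSpace ℝ E] [T2Space E]

theorem eq_of_add_diracMean_eq {X : Set E} {μ : WeakDual ℝ C(X, ℝ)} (hμ : IsMean μ) {w z : X}
    (h : μ + diracMean w = (2 : ℝ) • diracMean z) : w = z := by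
  by_contra hne
  obtain ⟨l, hl⟩ := geometric_hahn_banach_point_point (Subtype.coe_injective.ne hne)
  let f : C(X, ℝ) := |restrictDual X l - l z • 1|
  have hf : ∀ x : X, f x = |l x - l z| := fun x => by simp [f, restrictDual]
  have hz : μ f + f w = 2 * f z := congrArg (fun ν => ν f) h
  rw [hf, hf, sub_self, abs_zero, mul_zero] at hz
  have hw : 0 < |l w - l z| := abs_pos.2 (sub_ne_zero.2 hl.ne)
  have hμf := hμ.nonneg f (abs_nonneg _)
  linarith

theorem IsBoundary.eq_diracMean_of_equivariant {T : Γ →* (E →L[ℝ] E)} {X : Set E}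
    (hX : IsBoundary T X) {Φ : X → WeakDual ℝ C(X, ℝ)} (hΦ : Continuous Φ)
    (hmean : ∀ x, IsMean (Φ x)) (hequiv : ∀ g x, Φ (restrictMap (T g) (hX.mapsTo g) x) =
      mapMean (restrictMap (T g) (hX.mapsTo g)) (Φ x)) (z : X) : Φ z = diracMean z := by
  have := isCompact_iff_compactSpace.1 hX.isCompact
  let Ψ : X → WeakDual ℝ C(X, ℝ) := fun x => (2⁻¹ : ℝ) • (Φ x + diracMean x)
  have hΨ : IsClosed (Set.range Ψ) :=
    (isCompact_range ((hΦ.add continuous_diracMean).const_smul (2⁻¹ : ℝ))).isClosed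
  -- A limit of translates of the mean `Ψ z` is again of the form `Ψ w`.
  have horbit : Set.range (fun g => mapMean (restrictMap (T g) (hX.mapsTo g)) (Ψ z)) ⊆
      Set.range Ψ := by
    rintro _ ⟨g, rfl⟩
    refine ⟨restrictMap (T g) (hX.mapsTo g) z, ?_⟩
    simp only [Ψ, map_smul, map_add, hequiv]
    rfl
  have hΨz : IsMean (Ψ z) := by
    simp only [Ψ, smul_add]
    exact convex_setOf_isMean (hmean z) (isMean_diracMean z) (by norm_num) (by norm_num)
      (by norm_num)
  obtain ⟨w, hw⟩ := closure_minimal horbit hΨ (hX.diracMean_mem _ hΨz z)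
  have hsum : Φ w + diracMean w = (2 : ℝ) • diracMean z := by
    rw [← hw, smul_inv_smul₀ two_ne_zero]
  obtain rfl := eq_of_add_diracMean_eq (hmean w) hsum
  rwa [two_smul, add_left_inj] at hsum

end Rigidity

section MultiplicativeDomain

variable {A : Type*} [CStarAlgebra A] {φ : WeakDual ℂ A}

theorem IsCStarState.map_mul_eq_mul (hφ : IsCStarState φ) {b : A}
    (hb : φ (star b * b) = star (φ b) * φ b) (a : A) : φ (a * b) = φ a * φ b := by
  have hzero : φ (star (b - φ b • 1) * (b - φ b • 1)) = 0 := by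
    simp only [star_sub, star_smul, star_one, sub_mul, mul_sub, smul_mul_assoc, one_mul,
      mul_smul_comm, mul_one, map_sub, map_smul, smul_eq_mul, hb, hφ.map_star, hφ.1]
    ring
  have h := hφ.cauchy_schwarz (star a) (b - φ b • 1)
  rw [hzero, Complex.zero_re, mul_zero, star_star, mul_sub, mul_smul_comm, mul_one, map_sub,
    map_smul, smul_eq_mul] at h
  have h' := norm_eq_zero.1 ((pow_eq_zero_iff two_ne_zero).1 (h.antisymm (sq_nonneg _)))
  rw [sub_eq_zero.1 h', mul_comm]

theorem IsCStarState.map_mul_eq_mul' (hφ : IsCStarState φ) {b : A}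
    (hb : φ (b * star b) = φ b * star (φ b)) (a : A) : φ (b * a) = φ b * φ a := by
  have h := hφ.map_mul_eq_mul (b := star b)
    (by rw [star_star, hb, hφ.map_star, star_star]) (star a)
  rw [← star_mul, hφ.map_star, hφ.map_star, hφ.map_star, ← star_mul] at h
  exact star_injective h

end MultiplicativeDomain

section Covariance

open scoped CStarAlgebra

variable {A : Type*} [CStarAlgebra A] {X : Type*} [TopologicalSpace X]

variable {M : C(X, ℂ) →⋆ₐ[ℂ] A} {φ : WeakDual ℂ A} {x : X}

theorem IsCStarState.map_mul_starAlgHom (hφ : IsCStarState φ) (h : ∀ f, φ (M f) = f x) (a : A)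
    (f : C(X, ℂ)) : φ (a * M f) = φ a * f x := by
  rw [hφ.map_mul_eq_mul _ a, h]
  rw [← StarHomClass.map_star, ← map_mul, h, h]
  rfl

theorem IsCStarState.map_starAlgHom_mul (hφ : IsCStarState φ) (h : ∀ f, φ (M f) = f x) (a : A)
    (f : C(X, ℂ)) : φ (M f * a) = f x * φ a := by
  rw [hφ.map_mul_eq_mul' _ a, h]
  rw [← StarHomClass.map_star, ← map_mul, h, h]
  rfl

/-- The real functional `k ↦ re (φ (M k))` on `C(X, ℝ)`; it is a mean when `φ` is a state. -/
def realPullback [CompactSpace X] (M : C(X, ℂ) →⋆ₐ[ℂ] A) (φ : WeakDual ℂ A) :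
    WeakDual ℝ C(X, ℝ) :=
  StrongDual.toWeakDual (Complex.reCLM.comp ((((WeakDual.toStrongDual φ).comp
    ⟨M.toAlgHom.toLinearMap, map_continuous M⟩).restrictScalars ℝ).comp
      ⟨(ContinuousMap.realToRCLikeStarAlgHom X ℂ).toAlgHom.toLinearMap,
        ContinuousMap.continuous_realToRCLike X ℂ⟩))

variable [CompactSpace X] (M)

@[simp]
theorem realPullback_apply (φ : WeakDual ℂ A) (k : C(X, ℝ)) :
    realPullback M φ k = (φ (M (k.realToRCLike ℂ))).re :=
  rfl

theorem continuous_realPullback : Continuous (realPullback M) :=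
  WeakDual.continuous_of_continuous_eval fun k =>
    Complex.continuous_re.comp (WeakDual.eval_continuous (M (k.realToRCLike ℂ)))

theorem IsCStarState.isMean_realPullback (hφ : IsCStarState φ) :
    IsMean (realPullback M φ) where
  map_one := by
    have hone : (1 : C(X, ℝ)).realToRCLike ℂ = 1 :=
      map_one (ContinuousMap.realToRCLikeStarAlgHom X ℂ)
    rw [realPullback_apply, hone, map_one, hφ.1, Complex.one_re]
  nonneg k hk := by
    let q : C(X, ℝ) := ⟨fun x => √(k x), by fun_prop⟩
    have hq : k = star q * q := by
      ext x
      exact (Real.mul_self_sqrt (hk x)).symm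
    rw [realPullback_apply, hq, ContinuousMap.realToRCLike_mul, ContinuousMap.realToRCLike_star,
      map_mul, StarHomClass.map_star]
    exact hφ.re_nonneg _

variable {M}

theorem IsCStarState.map_eq_of_realPullback_eq_diracMean
    (hφ : IsCStarState φ) (h : realPullback M φ = diracMean x) (f : C(X, ℂ)) :
    φ (M f) = f x := by
  have hreal : ∀ k : C(X, ℝ), φ (M (k.realToRCLike ℂ)) = k x := fun k => by
    have hsa : star (M (k.realToRCLike ℂ)) = M (k.realToRCLike ℂ) := by
      rw [← StarHomClass.map_star, (ContinuousMap.isSelfAdjoint_realToRCLike ℂ).star_eq]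
    have hconj := hφ.map_star (M (k.realToRCLike ℂ))
    rw [hsa] at hconj
    rw [← Complex.conj_eq_iff_re.1 hconj.symm, ← realPullback_apply, h, diracMean_apply]
  let re : C(X, ℝ) := ⟨fun y => (f y).re, by fun_prop⟩
  let im : C(X, ℝ) := ⟨fun y => (f y).im, by fun_prop⟩
  have hf : re.realToRCLike ℂ + Complex.I • im.realToRCLike ℂ = f := by
    ext y
    change ((f y).re : ℂ) + Complex.I * (f y).im = f y
    rw [mul_comm, Complex.re_add_im]
  rw [← hf, map_add, map_add, map_smul, map_smul, hreal, hreal]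
  rfl

variable {Γ : Type*} [Group Γ] {v : Γ →* unitary A} {Z : Set (WeakDual ℂ A)}

/-- `(M, v)` is a covariant pair for the conjugation action of `v` on `Z`. -/
def IsCovariant (hZ : ∀ g, Set.MapsTo (conjHom v g) Z Z) (M : C(Z, ℂ) →⋆ₐ[ℂ] A) : Prop :=
  ∀ g f, star (v g : A) * M f * v g = M (f.comp (restrictMap (conjHom v g) (hZ g)))

variable {M : C(Z, ℂ) →⋆ₐ[ℂ] A}

theorem IsCovariant.mul_comm {hZ : ∀ g, Set.MapsTo (conjHom v g) Z Z} (hM : IsCovariant hZ M)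
    (g : Γ) (f : C(Z, ℂ)) :
    M f * v g = v g * M (f.comp (restrictMap (conjHom v g) (hZ g))) := by
  rw [← hM, mul_assoc, ← mul_assoc (v g : A), ← Unitary.coe_star, Unitary.coe_mul_star_self,
    one_mul]

theorem IsBoundary.map_eq_of_isCovariant [CompactSpace Z] (hZ : IsBoundary (conjHom v) Z)
    (hZs : ∀ z ∈ Z, IsCStarState z) (hM : IsCovariant hZ.mapsTo M) (z : Z) (f : C(Z, ℂ)) :
    z.1 (M f) = f z := by
  refine (hZs z z.2).map_eq_of_realPullback_eq_diracMean
    (hZ.eq_diracMean_of_equivariant (Φ := fun z => realPullback M z.1)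
      ((continuous_realPullback M).comp continuous_subtype_val)
      (fun z => (hZs z z.2).isMean_realPullback M) (fun g z => DFunLike.ext _ _ fun k => ?_) z) f
  exact congrArg (fun a => (z.1 a).re) (hM g (k.realToRCLike ℂ))

/-- The evaluation `z ↦ z a` as a continuous function on a set of functionals. -/
def evalOn (Z : Set (WeakDual ℂ A)) (a : A) : C(Z, ℂ) :=
  ⟨fun z => z.1 a, (WeakDual.eval_continuous a).comp continuous_subtype_val⟩

theorem IsBoundary.conjHom_eq_of_map_ne_zero [CompactSpace Z] (hZ : IsBoundary (conjHom v) Z)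
    (hZs : ∀ z ∈ Z, IsCStarState z) (hM : IsCovariant hZ.mapsTo M) {z : WeakDual ℂ A}
    (hz : z ∈ Z) {s : Γ} (hs : z (v s) ≠ 0) : conjHom v s z = z := by
  have heval := hZ.map_eq_of_isCovariant hZs hM ⟨z, hz⟩
  refine DFunLike.ext _ _ fun a => ?_
  have h := congrArg z (hM.mul_comm s (evalOn Z a))
  rw [(hZs z hz).map_starAlgHom_mul heval, (hZs z hz).map_mul_starAlgHom heval, mul_comm] at h
  exact (mul_left_cancel₀ hs h).symm

end Covariance

/-! ### States on simple C*-algebras -/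

section SimpleAlgebra

variable {S : Type*} [CStarAlgebra S]

variable (S) in
/-- A C*-algebra has no closed two-sided ideals other than `0` and itself; `IsCstarSimple G` says
this of the reduced C*-algebra of `G`. -/
def IsSimpleCStarAlgebra : Prop :=
  ∀ I : TwoSidedIdeal S, IsClosed (I : Set S) → I = ⊥ ∨ I = ⊤

/-- The largest two-sided ideal contained in the kernel of a functional. -/
def kernelIdeal (χ : WeakDual ℂ S) : TwoSidedIdeal S :=
  TwoSidedIdeal.mk' {a | ∀ x y, χ (x * a * y) = 0}
    (fun x y => by rw [mul_zero, zero_mul, map_zero])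
    (fun ha hb x y => by rw [mul_add, add_mul, map_add, ha, hb, add_zero])
    (fun ha x y => by rw [mul_neg, neg_mul, map_neg, ha, neg_zero])
    (fun {a b} hb x y => by simpa only [mul_assoc] using hb (x * a) y)
    (fun {a b} ha x y => by simpa only [mul_assoc] using ha x (b * y))

theorem mem_kernelIdeal {χ : WeakDual ℂ S} {a : S} :
    a ∈ kernelIdeal χ ↔ ∀ x y, χ (x * a * y) = 0 := by
  rw [← SetLike.mem_coe, kernelIdeal, TwoSidedIdeal.coe_mk']
  rfl

theorem isClosed_kernelIdeal (χ : WeakDual ℂ S) : IsClosed (kernelIdeal χ : Set S) := by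
  have hset : (kernelIdeal χ : Set S) = ⋂ x, ⋂ y, {a | χ (x * a * y) = 0} := by
    ext a
    simp only [SetLike.mem_coe, mem_kernelIdeal, Set.mem_iInter, Set.mem_ofPred_eq]
  rw [hset]
  exact isClosed_iInter fun x => isClosed_iInter fun y =>
    isClosed_eq ((map_continuous χ).comp (by fun_prop)) continuous_const

theorem kernelIdeal_eq_bot (hS : IsSimpleCStarAlgebra S)
    {χ : WeakDual ℂ S} (hχ : χ 1 ≠ 0) : kernelIdeal χ = ⊥ := by
  refine (hS _ (isClosed_kernelIdeal χ)).resolve_right fun htop => hχ ?_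
  have hone : (1 : S) ∈ kernelIdeal χ := htop ▸ TwoSidedIdeal.mem_top _
  simpa using mem_kernelIdeal.1 hone 1 1

theorem IsCStarState.eq_zero_of_forall_re_map_star_mul_self_eq_zero
    (hS : IsSimpleCStarAlgebra S) {χ : WeakDual ℂ S}
    (hχ : IsCStarState χ) {q : S} (hq : ∀ d, (χ (star (q * d) * (q * d))).re = 0) : q = 0 := by
  have hmem : star q * q ∈ kernelIdeal χ := mem_kernelIdeal.2 fun x y => by
    have h := hχ.cauchy_schwarz (q * star x) (q * y)
    rw [hq y, mul_zero] at h
    have hzero := norm_eq_zero.1 ((pow_eq_zero_iff two_ne_zero).1 (h.antisymm (sq_nonneg _)))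
    rw [star_mul, star_star] at hzero
    simpa only [mul_assoc] using hzero
  rw [kernelIdeal_eq_bot hS (hχ.1.trans_ne one_ne_zero), TwoSidedIdeal.mem_bot] at hmem
  exact (CStarRing.star_mul_self_eq_zero_iff q).1 hmem

theorem IsCStarState.nonneg_of_forall_re_map_conj_nonneg [PartialOrder S] [StarOrderedRing S]
    (hS : IsSimpleCStarAlgebra S) {χ : WeakDual ℂ S}
    (hχ : IsCStarState χ) {c : S} (hc : IsSelfAdjoint c)
    (h : ∀ b, 0 ≤ (χ (star b * c * b)).re) : 0 ≤ c := by
  have hn := CFC.negPart_nonneg c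
  have hstar : star c⁻ = c⁻ := (IsSelfAdjoint.of_nonneg hn).star_eq
  obtain ⟨m, hm⟩ := CStarAlgebra.nonneg_iff_eq_star_mul_self.1 hn
  have hcube : c⁻ * c * c⁻ = -(star (m * c⁻) * (m * c⁻)) := by
    nth_rw 2 [← CFC.posPart_sub_negPart c hc]
    rw [mul_sub, CFC.negPart_mul_posPart, zero_sub, star_mul, hstar, mul_assoc, ← mul_assoc _ m,
      ← hm, neg_mul, mul_assoc]
  have hzero : m * c⁻ = 0 := by
    refine hχ.eq_zero_of_forall_re_map_star_mul_self_eq_zero hS fun d => ?_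
    have hd : star (c⁻ * d) * c * (c⁻ * d) = -(star (m * c⁻ * d) * (m * c⁻ * d)) := by
      calc star (c⁻ * d) * c * (c⁻ * d) = star d * (c⁻ * c * c⁻) * d := by
            simp only [star_mul, hstar, mul_assoc]
        _ = -(star (m * c⁻ * d) * (m * c⁻ * d)) := by
            rw [hcube, star_mul (m * c⁻)]
            simp only [mul_neg, neg_mul, mul_assoc]
    have hneg := h (c⁻ * d)
    rw [hd, map_neg, Complex.neg_re, neg_nonneg] at hneg
    exact hneg.antisymm (hχ.re_nonneg _)
  have hsq : star c⁻ * c⁻ = 0 := by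
    rw [hstar]
    nth_rw 1 [hm]
    rw [mul_assoc, hzero, mul_zero]
  exact (CFC.negPart_eq_zero_iff c hc).1 ((CStarRing.star_mul_self_eq_zero_iff _).1 hsq)

theorem IsCStarState.map_realPart {φ : WeakDual ℂ S} (hφ : IsCStarState φ) (a : S) :
    φ (realPart a : S) = (φ a).re := by
  rw [realPart_apply_coe, ← Complex.coe_smul, map_smul, map_add, hφ.map_star, smul_eq_mul,
    ← starRingEnd_apply, Complex.add_conj]
  push_cast
  ring

theorem IsCStarState.mem_of_forall_isSelfAdjoint {K : Set (WeakDual ℂ S)} (hK : IsCompact K)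
    (hKc : Convex ℝ K) (hKs : ∀ φ ∈ K, IsCStarState φ) {τ : WeakDual ℂ S} (hτ : IsCStarState τ)
    (h : ∀ c, IsSelfAdjoint c → (∀ φ ∈ K, 0 ≤ (φ c).re) → 0 ≤ (τ c).re) : τ ∈ K := by
  by_contra hτK
  obtain ⟨F, r, hF, hr⟩ :=
    RCLike.geometric_hahn_banach_closed_point (𝕜 := ℂ) hKc hK.isClosed hτK
  obtain ⟨a, rfl⟩ := LinearMap.dualEmbedding_surjective (topDualPairing ℂ S) F
  have hc : ∀ φ, IsCStarState φ → (φ ((r : ℂ) • 1 - (realPart a : S))).re = r - (φ a).re :=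
    fun φ hφ => by
      rw [map_sub, map_smul, hφ.1, hφ.map_realPart, smul_eq_mul, mul_one, Complex.sub_re,
        Complex.ofReal_re, Complex.ofReal_re]
  have hsa : IsSelfAdjoint ((r : ℂ) • 1 - (realPart a : S)) :=
    .sub (.smul (Complex.conj_ofReal r) (.one S)) (realPart a).2
  have hτa := h _ hsa fun φ hφ => by
    rw [hc φ (hKs φ hφ)]
    exact sub_nonneg.2 (hF φ hφ).le
  rw [hc τ hτ, sub_nonneg] at hτa
  exact hτa.not_gt hr

end SimpleAlgebra

section Compression

variable {A : Type*} [CStarAlgebra A]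

/-- The vector state `a ↦ ψ (x⋆ a x) / ψ (x⋆ x)` in the GNS representation of `ψ`. -/
def compress (ψ : WeakDual ℂ A) (x : A) : WeakDual ℂ A :=
  (ψ (star x * x)).re⁻¹ • weakTranspose (ContinuousLinearMap.mulLeftRight ℂ A (star x) x) ψ

theorem compress_apply (ψ : WeakDual ℂ A) (x a : A) :
    compress ψ x a = ((ψ (star x * x)).re⁻¹ : ℝ) * ψ (star x * a * x) :=
  (Complex.real_smul).trans rfl

theorem IsCStarState.compress {ψ : WeakDual ℂ A} (hψ : IsCStarState ψ) {x : A}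
    (hx : (ψ (star x * x)).re ≠ 0) : IsCStarState (compress ψ x) := by
  refine ⟨?_, fun a => ?_⟩
  · have him : ψ (star x * x) = (ψ (star x * x)).re :=
      Complex.eq_re_of_ofReal_le (r := 0) (by simpa using hψ.2 x)
    rw [compress_apply, mul_one, him, Complex.ofReal_re, ← Complex.ofReal_mul, inv_mul_cancel₀ hx,
      Complex.ofReal_one]
  · rw [compress_apply]
    have hassoc : star x * (star a * a) * x = star (a * x) * (a * x) := by
      simp only [star_mul, mul_assoc]
    rw [hassoc]
    exact mul_nonneg (Complex.zero_le_real.2 (inv_nonneg.2 (hψ.re_nonneg x))) (hψ.2 _)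

variable {S : Type*} [CStarAlgebra S]

/-- The states on `A` killing every element which all vector states of `ψ` with vectors from the
image of `j` kill. -/
def compressionStates (j : S →⋆ₐ[ℂ] A) (ψ : WeakDual ℂ A) : Set (WeakDual ℂ A) :=
  {ω | IsCStarState ω ∧ ∀ T, (∀ b, ψ (star (j b) * T * j b) = 0) → ω T = 0}

theorem isCompact_compressionStates (j : S →⋆ₐ[ℂ] A) (ψ : WeakDual ℂ A) :
    IsCompact (compressionStates j ψ) := by
  refine isCompact_setOf_isCStarState.inter_right ?_
  have hset : {ω : WeakDual ℂ A | ∀ T, (∀ b, ψ (star (j b) * T * j b) = 0) → ω T = 0} =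
      ⋂ T, ⋂ _ : ∀ b, ψ (star (j b) * T * j b) = 0, {ω | ω T = 0} := by
    ext ω
    simp only [Set.mem_iInter, Set.mem_ofPred_eq]
  change IsClosed {ω : WeakDual ℂ A | ∀ T, (∀ b, ψ (star (j b) * T * j b) = 0) → ω T = 0}
  rw [hset]
  exact isClosed_iInter fun T => isClosed_iInter fun _ =>
    isClosed_eq (WeakDual.eval_continuous T) continuous_const

theorem convex_compressionStates (j : S →⋆ₐ[ℂ] A) (ψ : WeakDual ℂ A) :
    Convex ℝ (compressionStates j ψ) := by
  refine convex_setOf_isCStarState.inter fun φ hφ χ hχ s t _ _ _ T hT => ?_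
  change s • φ T + t • χ T = 0
  rw [hφ T hT, hχ T hT, smul_zero, smul_zero, add_zero]

theorem compress_mem_compressionStates {j : S →⋆ₐ[ℂ] A} {ψ : WeakDual ℂ A}
    (hψ : IsCStarState ψ) {b : S} (hb : (ψ (star (j b) * j b)).re ≠ 0) :
    compress ψ (j b) ∈ compressionStates j ψ :=
  ⟨hψ.compress hb, fun T hT => by rw [compress_apply, hT, mul_zero]⟩

theorem IsCStarState.exists_mem_compressionStates_dualRestrict_eq
    (hS : IsSimpleCStarAlgebra S) (j : S →⋆ₐ[ℂ] A)
    {ψ : WeakDual ℂ A} (hψ : IsCStarState ψ) {τ : WeakDual ℂ S} (hτ : IsCStarState τ) :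
    ∃ ω ∈ compressionStates j ψ, _root_.dualRestrict j ω = τ := by
  refine hτ.mem_of_forall_isSelfAdjoint
    ((isCompact_compressionStates j ψ).image (_root_.dualRestrict j).continuous)
    ((convex_compressionStates j ψ).linear_image (_root_.dualRestrict j).toLinearMap)
    (by rintro _ ⟨ω, hω, rfl⟩; exact hω.1.dualRestrict) fun c hc hpos => ?_
  let := CStarAlgebra.spectralOrder S
  have := CStarAlgebra.spectralOrderedRing S
  suffices 0 ≤ c from (Complex.le_def.1 (hτ.nonneg this)).1
  refine (IsCStarState.dualRestrict (j := j) hψ).nonneg_of_forall_re_map_conj_nonneg hS hc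
    fun b => ?_
  rw [dualRestrict_apply, map_mul j, map_mul j, StarHomClass.map_star]
  by_cases hb : (ψ (star (j b) * j b)).re = 0
  · have h := hψ.cauchy_schwarz (star (star (j b) * j c)) (j b)
    rw [hb, mul_zero, star_star] at h
    rw [norm_eq_zero.1 ((pow_eq_zero_iff two_ne_zero).1 (h.antisymm (sq_nonneg _))),
      Complex.zero_re]
  · have h := hpos _ ⟨_, compress_mem_compressionStates hψ hb, rfl⟩
    rw [dualRestrict_apply, compress_apply, Complex.re_ofReal_mul] at h
    exact nonneg_of_mul_nonneg_right h (inv_pos.2 ((hψ.re_nonneg (j b)).lt_of_ne' hb))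

end Compression

section Contradiction

open scoped CStarAlgebra

variable {A S Γ : Type*} [CStarAlgebra A] [CStarAlgebra S] [Group Γ]

theorem IsCStarState.map_mul_unitary {ψ : WeakDual ℂ A} (hψ : IsCStarState ψ) {w : unitary A}
    (hw : ψ w = 1) (a : A) : ψ (a * w) = ψ a := by
  rw [hψ.map_mul_eq_mul _ a, hw, mul_one]
  rw [Unitary.star_mul_self_of_mem w.2, hψ.1, hw, star_one, one_mul]

variable {v : Γ →* unitary A} {Z : Set (WeakDual ℂ A)} {M : C(Z, ℂ) →⋆ₐ[ℂ] A} {z : Z}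
  {ψ : WeakDual ℂ A}

theorem IsBoundary.map_mul_sub_one_mul_evalOn_mul [CompactSpace Z]
    (hZ : IsBoundary (conjHom v) Z) (hZs : ∀ z ∈ Z, IsCStarState z)
    (hM : IsCovariant hZ.mapsTo M) (hψ : IsCStarState ψ)
    (hψv : ∀ h, conjHom v h z = (z : WeakDual ℂ A) → ψ (v h) = 1) (hψM : ∀ f, ψ (M f) = f z)
    (a : A) (s k : Γ) : ψ (a * ((v s - 1) * M (evalOn Z (v s)) * v k)) = 0 := by
  rw [mul_assoc, hM.mul_comm, ← mul_assoc, ← mul_assoc, hψ.map_mul_starAlgHom hψM]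
  by_cases hk : conjHom v k z (v s) = 0
  · exact mul_eq_zero_of_right _ hk
  -- `s` fixes `k z`, so `k⁻¹ s k` fixes `z`.
  have hfix : conjHom v (k⁻¹ * s * k) z = (z : WeakDual ℂ A) := by
    have h := hZ.conjHom_eq_of_map_ne_zero hZs hM (hZ.mapsTo k z.2) hk
    rw [map_mul, map_mul, mul_apply_eq_comp, mul_apply_eq_comp, h, ← mul_apply_eq_comp, ← map_mul,
      inv_mul_cancel, map_one, one_apply_eq_self]
  have hcomm : (v s : A) * v k = v k * v (k⁻¹ * s * k) := by
    rw [← Submonoid.coe_mul, ← Submonoid.coe_mul, ← map_mul, ← map_mul]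
    group
  rw [mul_assoc a, sub_mul, one_mul, hcomm, mul_sub, ← mul_assoc, map_sub,
    hψ.map_mul_unitary (hψv _ hfix), sub_self, zero_mul]

variable {u : Γ →* unitary S} {j : S →⋆ₐ[ℂ] A}

theorem map_mul_mul_starAlgHom_eq_zero (huv : ∀ g, j (u g) = v g)
    (hdense : ∀ V : Submodule ℂ S, IsClosed (V : Set S) → (∀ g, (u g : S) ∈ V) → ∀ a, a ∈ V)
    {x : A} (hx : ∀ k, ψ (x * v k) = 0) (b : S) : ψ (x * j b) = 0 := by
  let l : S →L[ℂ] ℂ := (WeakDual.toStrongDual ψ).comp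
    ((ContinuousLinearMap.mul ℂ A x).comp ⟨j.toAlgHom.toLinearMap, map_continuous j⟩)
  exact hdense (LinearMap.ker (l : S →ₗ[ℂ] ℂ)) l.isClosed_ker
    (fun g => (congrArg (fun y => ψ (x * y)) (huv g)).trans (hx g)) b

theorem IsBoundary.exists_mem_closure_orbit_realPullback_eq_diracMean [CompactSpace Z]
    (hZ : IsBoundary (conjHom v) Z) (hM : IsCovariant hZ.mapsTo M) {ω : WeakDual ℂ A}
    (hω : IsCStarState ω) (z : Z) : ∃ φ ∈ closure (Set.range fun g => conjHom v g ω),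
      IsCStarState φ ∧ realPullback M φ = diracMean z := by
  have hsub : closure (Set.range fun g => conjHom v g ω) ⊆ {φ | IsCStarState φ} :=
    closure_minimal (Set.range_subset_iff.2 fun g => mapsTo_conjHom_setOf_isCStarState v g hω)
      isCompact_setOf_isCStarState.isClosed
  have hcompact : IsCompact (closure (Set.range fun g => conjHom v g ω)) :=
    isCompact_setOf_isCStarState.of_isClosed_subset isClosed_closure hsub
  have horbit : (Set.range fun g =>
      mapMean (restrictMap (conjHom v g) (hZ.mapsTo g)) (realPullback M ω)) ⊆
      realPullback M '' closure (Set.range fun g => conjHom v g ω) := by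
    rintro _ ⟨g, rfl⟩
    refine ⟨_, subset_closure ⟨g, rfl⟩, DFunLike.ext _ _ fun k => ?_⟩
    exact congrArg (fun a => (ω a).re) (hM g (k.realToRCLike ℂ))
  obtain ⟨φ, hφ, hφz⟩ := closure_minimal horbit
    (hcompact.image (continuous_realPullback M)).isClosed
    (hZ.diracMean_mem _ (hω.isMean_realPullback M) z)
  exact ⟨φ, hφ, hsub hφ, hφz⟩

theorem map_eq_zero_of_mem_closure_orbit {ω φ : WeakDual ℂ A} {a : A}
    (hφ : φ ∈ closure (Set.range fun g => conjHom v g ω)) (ha : ∀ g, conjHom v g ω a = 0) :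
    φ a = 0 :=
  closure_minimal (t := {φ : WeakDual ℂ A | φ a = 0}) (Set.range_subset_iff.2 ha)
    (isClosed_eq (WeakDual.eval_continuous a) continuous_const) hφ

theorem IsBoundary.map_eq_zero_of_simple [CompactSpace Z]
    (hZ : IsBoundary (conjHom v) Z) (hZs : ∀ z ∈ Z, IsCStarState z)
    (hM : IsCovariant hZ.mapsTo M) (huv : ∀ g, j (u g) = v g)
    (hdense : ∀ V : Submodule ℂ S, IsClosed (V : Set S) → (∀ g, (u g : S) ∈ V) → ∀ a, a ∈ V)
    (hS : IsSimpleCStarAlgebra S)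
    {τ : WeakDual ℂ S} (hτ : IsCStarState τ) (hτu : ∀ g, g ≠ 1 → τ (u g) = 0)
    (hψ : IsCStarState ψ) (hψv : ∀ h, conjHom v h z = (z : WeakDual ℂ A) → ψ (v h) = 1)
    (hψM : ∀ f, ψ (M f) = f z) {s : Γ} (hs : s ≠ 1) : (z : WeakDual ℂ A) (v s) = 0 := by
  let f := evalOn Z (v s : A)
  obtain ⟨ω, ⟨hω, hωψ⟩, hωτ⟩ := hψ.exists_mem_compressionStates_dualRestrict_eq hS j hτ
  obtain ⟨φ, hφ, hφs, hφz⟩ := hZ.exists_mem_closure_orbit_realPullback_eq_diracMean hM hω z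
  have hφM := hφs.map_eq_of_realPullback_eq_diracMean hφz
  have hφv : φ (v s) = 0 := map_eq_zero_of_mem_closure_orbit hφ fun g => by
    have hne : g⁻¹ * s * g ≠ 1 := fun h => hs (by
      rwa [mul_assoc, inv_mul_eq_one, eq_comm, mul_eq_right] at h)
    rw [conjHom_apply, ← Unitary.coe_star, Unitary.star_eq_inv, ← map_inv, ← Submonoid.coe_mul,
      ← Submonoid.coe_mul, ← map_mul, ← map_mul, ← huv, ← dualRestrict_apply, hωτ,
      hτu _ hne]
  have hφX : φ ((v s - 1) * M f) = 0 := map_eq_zero_of_mem_closure_orbit hφ fun g => by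
    rw [conjHom_apply]
    refine hωψ _ fun b => ?_
    have h := map_mul_mul_starAlgHom_eq_zero (ψ := ψ) huv hdense
      (x := star (j b) * star (v g : A) * ((v s - 1) * M f) * v g) (fun k => by
        have h := hZ.map_mul_sub_one_mul_evalOn_mul hZs hM hψ hψv hψM
          (star (j b) * star (v g : A)) s (g * k)
        rw [map_mul v, Submonoid.coe_mul] at h
        simpa only [f, mul_assoc] using h) b
    simpa only [mul_assoc] using h
  rw [hφs.map_mul_starAlgHom hφM, map_sub, hφv, hφs.1, zero_sub, neg_one_mul, neg_eq_zero] at hφX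
  exact hφX

end Contradiction

/-! ### Amenable stabilizers -/

section DiagonalOperators

variable {ι κ : Type*}

/-- The diagonal operator with diagonal `φ`, that is, multiplication by the bounded function
`φ`. -/
def diagonalCLM (φ : ℓ^∞(ι, ℂ)) : ℓ²(ι, ℂ) →L[ℂ] ℓ²(ι, ℂ) :=
  lp.mapCLM 2 (fun k => φ k • ContinuousLinearMap.id ℂ ℂ) (K := ‖φ‖) (norm_nonneg φ) fun k => by
    rw [norm_smul, ContinuousLinearMap.norm_id, mul_one]
    exact lp.norm_apply_le_norm ENNReal.top_ne_zero φ k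

theorem diagonalCLM_apply (φ : ℓ^∞(ι, ℂ)) (f : ℓ²(ι, ℂ)) (k : ι) :
    diagonalCLM φ f k = φ k * f k :=
  rfl

theorem star_diagonalCLM (φ : ℓ^∞(ι, ℂ)) : star (diagonalCLM φ) = diagonalCLM (star φ) := by
  rw [ContinuousLinearMap.star_eq_adjoint, eq_comm, ContinuousLinearMap.eq_adjoint_iff]
  intro x y
  rw [lp.inner_eq_tsum, lp.inner_eq_tsum]
  refine tsum_congr fun k => ?_
  simp only [diagonalCLM_apply, lp.star_apply, RCLike.inner_apply, map_mul, RCLike.star_def,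
    Complex.conj_conj]
  ring

/-- The representation of `ℓ^∞(ι)` on `ℓ²(ι)` by diagonal operators. -/
def diagonal : ℓ^∞(ι, ℂ) →⋆ₐ[ℂ] (ℓ²(ι, ℂ) →L[ℂ] ℓ²(ι, ℂ)) where
  toFun := diagonalCLM
  map_one' := by ext f k; simp [diagonalCLM_apply]
  map_mul' φ θ := by ext f k; simp [diagonalCLM_apply, mul_assoc]
  map_zero' := by ext f k; simp [diagonalCLM_apply]
  map_add' φ θ := by ext f k; simp [diagonalCLM_apply, add_mul]
  commutes' c := by
    ext f k
    simp [diagonalCLM_apply, Algebra.algebraMap_eq_smul_one]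
  map_star' φ := (star_diagonalCLM φ).symm

theorem diagonal_apply (φ : ℓ^∞(ι, ℂ)) (f : ℓ²(ι, ℂ)) (k : ι) : diagonal φ f k = φ k * f k :=
  rfl

theorem diagonal_delta (φ : ℓ^∞(ι, ℂ)) (k : ι) : diagonal φ (delta k) = φ k • delta k := by
  classical
  ext h
  rw [diagonal_apply, lp.coeFn_smul, Pi.smul_apply, smul_eq_mul, delta_apply]
  split_ifs with hh
  · rw [hh]
  · rw [mul_zero, mul_zero]

/-- The pullback of bounded functions along a map. -/
def linftyComap (σ : ι → κ) : ℓ^∞(κ, ℂ) →⋆ₐ[ℂ] ℓ^∞(ι, ℂ) where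
  toFun φ := ⟨fun k => φ (σ k), memℓp_infty
    ⟨‖φ‖, Set.forall_mem_range.2 fun k => lp.norm_apply_le_norm ENNReal.top_ne_zero φ (σ k)⟩⟩
  map_one' := rfl
  map_mul' _ _ := rfl
  map_zero' := rfl
  map_add' _ _ := rfl
  commutes' _ := rfl
  map_star' _ := rfl

theorem linftyComap_apply (σ : ι → κ) (φ : ℓ^∞(κ, ℂ)) (k : ι) : linftyComap σ φ k = φ (σ k) :=
  rfl

/-- The restriction of continuous functions to a family of points. -/
def linftySample {X : Type*} [TopologicalSpace X] [CompactSpace X] (o : ι → X) :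
    C(X, ℂ) →⋆ₐ[ℂ] ℓ^∞(ι, ℂ) where
  toFun f := ⟨fun k => f (o k), memℓp_infty
    ⟨‖f‖, Set.forall_mem_range.2 fun k => f.norm_coe_le_norm (o k)⟩⟩
  map_one' := rfl
  map_mul' _ _ := rfl
  map_zero' := rfl
  map_add' _ _ := rfl
  commutes' _ := rfl
  map_star' _ := rfl

theorem star_lreg_mul_diagonal_mul_lreg (g : G) (φ : ℓ^∞(G, ℂ)) :
    star (lreg g) * diagonal φ * lreg g = diagonal (linftyComap (g * ·) φ) := by
  refine eq_of_forall_delta fun k => ?_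
  rw [mul_apply_eq_comp, mul_apply_eq_comp, lreg_delta, diagonal_delta, map_smul, star_lreg,
    lreg_delta, inv_mul_cancel_left, diagonal_delta, linftyComap_apply]

end DiagonalOperators

section Amenability

variable {ι H X Y : Type*} [Group H] [MulAction H X] [MulAction H Y]

theorem IsCStarState.map_nonneg_of_forall_nonneg {m : WeakDual ℂ ℓ^∞(ι, ℂ)} (hm : IsCStarState m)
    {φ : ℓ^∞(ι, ℂ)} (hφ : ∀ k, 0 ≤ φ k) : 0 ≤ m φ := by
  let θ : ℓ^∞(ι, ℂ) := ⟨fun k => (√(φ k).re : ℂ), memℓp_infty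
    ⟨√‖φ‖, Set.forall_mem_range.2 fun k => by
      rw [Complex.norm_real, Real.norm_of_nonneg (Real.sqrt_nonneg _)]
      exact Real.sqrt_le_sqrt ((Complex.re_le_norm _).trans
        (lp.norm_apply_le_norm ENNReal.top_ne_zero φ k))⟩⟩
  have hθ : star θ * θ = φ := by
    ext k
    have hre := Complex.nonneg_iff.1 (hφ k)
    change star ((√(φ k).re : ℂ)) * (√(φ k).re : ℂ) = φ k
    rw [RCLike.star_def, Complex.conj_ofReal, ← Complex.ofReal_mul, Real.mul_self_sqrt hre.1]
    exact Complex.ext rfl hre.2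
  rw [← hθ]
  exact hm.2 θ

variable (H X) in
/-- An action of `H` on a set `X` is amenable if there is an invariant mean on `ℓ^∞(X)`. -/
def IsAmenableAction : Prop :=
  ∃ m : WeakDual ℂ ℓ^∞(X, ℂ), IsCStarState m ∧
    ∀ h : H, dualRestrict (linftyComap (h • · : X → X)) m = m

theorem IsAmenableAction.map (hX : IsAmenableAction H X) (σ : X →[H] Y) :
    IsAmenableAction H Y := by
  obtain ⟨m, hm, hinv⟩ := hX
  refine ⟨dualRestrict (linftyComap σ) m, hm.dualRestrict, fun h => ?_⟩
  conv_rhs => rw [← hinv h]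
  refine DFunLike.ext _ _ fun φ => ?_
  simp only [dualRestrict_apply]
  congr 1
  ext x
  simp only [linftyComap_apply, map_smul]

theorem IsAmenableAction.subgroup_self {K : Subgroup G} (h : IsAmenableAction K G) :
    IsAmenableAction K K := by
  obtain ⟨T, hT, -⟩ := K.exists_isComplement_right 1
  exact h.map ⟨fun g => (hT.equiv g).1, fun k g => by
    simpa using! congrArg Prod.fst (hT.equiv_mul_left k g)⟩

theorem isAmenableAction_of_conjHom_regularRep_eq {K : Subgroup G}
    {z : WeakDual ℂ (ℓ²(G, ℂ) →L[ℂ] ℓ²(G, ℂ))} (hz : IsCStarState z)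
    (hK : ∀ h ∈ K, conjHom regularRep h z = z) : IsAmenableAction K G := by
  refine ⟨dualRestrict diagonal z, hz.dualRestrict, fun h => DFunLike.ext _ _ fun φ => ?_⟩
  conv_rhs => rw [← hK h h.2]
  simp only [dualRestrict_apply, conjHom_apply, coe_regularRep, star_lreg_mul_diagonal_mul_lreg]
  rfl

end Amenability

section Reiter

variable {ι H : Type*} [Group H]

variable (ι) in
/-- The probability densities on the set `ι`, inside `ℓ¹(ι)`. -/
def densities : Set ℓ¹(ι, ℝ) :=
  {p | (∀ k, 0 ≤ p k) ∧ HasSum p 1}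

theorem convex_densities : Convex ℝ (densities ι) := by
  rintro p ⟨hp, hp₁⟩ q ⟨hq, hq₁⟩ a b ha hb hab
  refine ⟨fun k => add_nonneg (mul_nonneg ha (hp k)) (mul_nonneg hb (hq k)), ?_⟩
  have hsum := (hp₁.mul_left a).add (hq₁.mul_left b)
  rwa [mul_one, mul_one, hab] at hsum

open Classical in
theorem single_mem_densities (k : ι) : lp.single 1 k (1 : ℝ) ∈ densities ι := by
  refine ⟨fun h => ?_, ?_⟩
  · rw [lp.coeFn_single]
    exact (Pi.single_nonneg (α := fun _ : ι => ℝ)).2 zero_le_one h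
  · rw [lp.coeFn_single]
    exact hasSum_pi_single k 1

/-- Left translation of summable functions on a group. -/
def l1Translate (s : H) : ℓ¹(H, ℝ) →ₗ[ℝ] ℓ¹(H, ℝ) where
  toFun p := ⟨fun k => p (s⁻¹ * k),
    memℓp_gen ((Equiv.mulLeft s⁻¹).summable_iff.2 ((lp.memℓp p).summable (by norm_num)))⟩
  map_add' _ _ := rfl
  map_smul' _ _ := rfl

theorem l1Translate_apply (s : H) (p : ℓ¹(H, ℝ)) (k : H) : l1Translate s p k = p (s⁻¹ * k) :=
  rfl

open Classical in
theorem l1Translate_single (s k : H) :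
    l1Translate s (lp.single 1 k 1) = lp.single 1 (s * k) 1 := by
  ext h
  rw [l1Translate_apply, lp.coeFn_single, lp.coeFn_single, Pi.single_apply, Pi.single_apply]
  exact if_congr inv_mul_eq_iff_eq_mul rfl rfl

theorem IsAmenableAction.nonpos_of_forall_le (hH : IsAmenableAction H H) {F : Type*} [Fintype F]
    (s : F → H) (φ : F → ℓ^∞(H, ℂ)) {c : ℝ}
    (hc : ∀ k, (c : ℂ) ≤ ∑ i, (φ i (s i * k) - φ i k)) : c ≤ 0 := by
  obtain ⟨m, hm, hinv⟩ := hH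
  let θ : ℓ^∞(H, ℂ) := ∑ i, (linftyComap (s i * ·) (φ i) - φ i)
  have hθ : m θ = 0 := by
    rw [map_sum]
    refine Finset.sum_eq_zero fun i _ => ?_
    rw [map_sub, sub_eq_zero]
    exact DFunLike.congr_fun (hinv (s i)) (φ i)
  have hnonneg : 0 ≤ m (θ - (c : ℂ) • 1) := hm.map_nonneg_of_forall_nonneg fun k => by
    rw [lp.coeFn_sub, Pi.sub_apply, sub_nonneg, lp.coeFn_sum, Finset.sum_apply]
    exact (mul_one (c : ℂ)).trans_le (hc k)
  rw [map_sub, hθ, map_smul, hm.1, zero_sub, smul_eq_mul, mul_one, Left.nonneg_neg_iff] at hnonneg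
  exact Complex.real_le_real.1 hnonneg

/-- Day's theorem, by Hahn–Banach separation in `ℓ¹(H)^F`. -/
theorem IsAmenableAction.exists_norm_l1Translate_sub_lt (hH : IsAmenableAction H H) (F : Finset H)
    {ε : ℝ} (hε : 0 < ε) :
    ∃ p ∈ densities H, ∀ s ∈ F, ‖l1Translate s p - p‖ < ε := by
  classical
  let L : ℓ¹(H, ℝ) →ₗ[ℝ] (F → ℓ¹(H, ℝ)) :=
    LinearMap.pi fun s => l1Translate (s : H) - LinearMap.id
  have hzero : (0 : F → ℓ¹(H, ℝ)) ∈ closure (L '' densities H) := by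
    by_contra h0
    obtain ⟨f, c, hc, hf⟩ := geometric_hahn_banach_point_closed
      (convex_densities.linear_image L).closure isClosed_closure h0
    rw [map_zero] at hc
    let φ : F → ℓ^∞(H, ℂ) := fun s => ⟨fun k => (f (Pi.single s (lp.single 1 k 1)) : ℂ),
      memℓp_infty ⟨‖f‖, Set.forall_mem_range.2 fun k => by
        rw [Complex.norm_real]
        refine (f.le_opNorm _).trans_eq ?_
        rw [Pi.norm_single, lp.norm_single zero_lt_one, norm_one, mul_one]⟩⟩
    refine hc.not_ge (hH.nonpos_of_forall_le (fun s : F => (s : H)) φ fun k => ?_)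
    have hk := (hf _ (subset_closure ⟨_, single_mem_densities k, rfl⟩)).le
    rw [← Finset.univ_sum_single (L (lp.single 1 k 1)), map_sum] at hk
    refine (Complex.real_le_real.2 hk).trans_eq ?_
    rw [Complex.ofReal_sum]
    refine Finset.sum_congr rfl fun s _ => ?_
    change ((f (Pi.single s (l1Translate (s : H) (lp.single 1 k 1) - lp.single 1 k 1)) : ℝ) : ℂ) =
      (f (Pi.single s (lp.single 1 (s * k) 1)) : ℂ) - (f (Pi.single s (lp.single 1 k 1)) : ℂ)
    rw [l1Translate_single, Pi.single_sub, map_sub, Complex.ofReal_sub]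
  obtain ⟨_, ⟨p, hp, rfl⟩, hd⟩ := Metric.mem_closure_iff.1 hzero ε hε
  rw [dist_zero_left] at hd
  exact ⟨p, hp, fun s hs => (norm_le_pi_norm (L p) ⟨s, hs⟩).trans_lt hd⟩

/-- The unit vector `√p` of `ℓ²(ι)` attached to a density `p`. -/
def sqrtVector (p : densities ι) : ℓ²(ι, ℂ) :=
  ⟨fun k => (√(p.1 k) : ℂ), memℓp_gen (by
    simpa [Real.sq_sqrt (p.2.1 _), abs_of_nonneg (Real.sqrt_nonneg _)] using! p.2.2.summable)⟩

theorem hasSum_norm_sq (f : ℓ²(ι, ℂ)) : HasSum (fun k => ‖f k‖ ^ 2) (‖f‖ ^ 2) := by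
  simpa using lp.hasSum_norm (p := 2) (by norm_num) f

theorem norm_sqrtVector (p : densities ι) : ‖sqrtVector p‖ = 1 := by
  have hsq : ∀ k, ‖sqrtVector p k‖ ^ 2 = p.1 k := fun k => by
    change ‖(√(p.1 k) : ℂ)‖ ^ 2 = p.1 k
    rw [Complex.norm_real, Real.norm_eq_abs, sq_abs, Real.sq_sqrt (p.2.1 k)]
  have h := hasSum_norm_sq (sqrtVector p)
  simp only [hsq] at h
  exact (pow_eq_one_iff_of_nonneg (norm_nonneg _) two_ne_zero).1 (h.unique p.2.2)

theorem sq_sqrt_sub_sqrt_le {a b : ℝ} (ha : 0 ≤ a) (hb : 0 ≤ b) : (√a - √b) ^ 2 ≤ |a - b| := by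
  have hfactor : a - b = (√a - √b) * (√a + √b) := by
    linear_combination -(Real.sq_sqrt ha) + Real.sq_sqrt hb
  rw [hfactor, abs_mul, ← sq_abs, sq]
  refine mul_le_mul_of_nonneg_left ?_ (abs_nonneg _)
  rw [abs_of_nonneg (add_nonneg (Real.sqrt_nonneg a) (Real.sqrt_nonneg b)), abs_le]
  constructor <;> linarith [Real.sqrt_nonneg a, Real.sqrt_nonneg b]

theorem norm_sq_lreg_sqrtVector_sub_le (s : G) (p : densities G) :
    ‖lreg s (sqrtVector p) - sqrtVector p‖ ^ 2 ≤ ‖l1Translate s p.1 - p.1‖ := by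
  have hnorm : HasSum (fun k => ‖(l1Translate s p.1 - p.1) k‖) ‖l1Translate s p.1 - p.1‖ := by
    simpa using lp.hasSum_norm (p := 1) (by norm_num) (l1Translate s p.1 - p.1)
  refine hasSum_le (fun k => ?_) (hasSum_norm_sq _) hnorm
  rw [lp.coeFn_sub, Pi.sub_apply, lreg_apply]
  change ‖((√(p.1 (s⁻¹ * k)) : ℂ)) - (√(p.1 k) : ℂ)‖ ^ 2 ≤ |p.1 (s⁻¹ * k) - p.1 k|
  rw [← Complex.ofReal_sub, Complex.norm_real, Real.norm_eq_abs, sq_abs]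
  exact sq_sqrt_sub_sqrt_le (p.2.1 _) (p.2.1 _)

end Reiter

section VectorStates

variable {E F : Type*} [NormedAddCommGroup E] [InnerProductSpace ℂ E]
  [NormedAddCommGroup F] [InnerProductSpace ℂ F]

/-- The vector functional `T ↦ ⟨ξ, T ξ⟩`. -/
def vectorFunctional (ξ : E) : WeakDual ℂ (E →L[ℂ] E) :=
  StrongDual.toWeakDual ((innerSL ℂ ξ).comp (ContinuousLinearMap.apply ℂ E ξ))

theorem vectorFunctional_apply (ξ : E) (T : E →L[ℂ] E) :
    vectorFunctional ξ T = inner ℂ ξ (T ξ) :=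
  rfl

theorem vectorFunctional_one {ξ : E} (hξ : ‖ξ‖ = 1) : vectorFunctional ξ 1 = 1 := by
  rw [vectorFunctional_apply, one_apply_eq_self, inner_self_eq_norm_sq_to_K, hξ]
  norm_num

theorem norm_vectorFunctional_sub_one_le {ξ : E} (hξ : ‖ξ‖ = 1) (T : E →L[ℂ] E) :
    ‖vectorFunctional ξ T - 1‖ ≤ ‖T ξ - ξ‖ := by
  rw [← vectorFunctional_one hξ, ← map_sub, vectorFunctional_apply]
  exact (norm_inner_le_norm ξ ((T - 1) ξ)).trans_eq (by rw [hξ, one_mul]; rfl)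

variable [CompleteSpace E] [CompleteSpace F]

theorem isCStarState_vectorFunctional {ξ : E} (hξ : ‖ξ‖ = 1) :
    IsCStarState (vectorFunctional ξ) := by
  refine ⟨vectorFunctional_one hξ, fun T => ?_⟩
  rw [vectorFunctional_apply, mul_apply_eq_comp, ContinuousLinearMap.star_eq_adjoint,
    ContinuousLinearMap.adjoint_inner_right, inner_self_eq_norm_sq_to_K]
  exact (Complex.zero_le_real.2 (sq_nonneg ‖T ξ‖)).trans_eq (Complex.ofReal_pow _ 2)

/-- The functional `T ↦ ψ (V* T V)` for an isometry `V`. -/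
def isometryPullback (V : E →ₗᵢ[ℂ] F) (ψ : WeakDual ℂ (E →L[ℂ] E)) : WeakDual ℂ (F →L[ℂ] F) :=
  weakTranspose ((V.toContinuousLinearMap.adjoint.postcomp E).comp
    (V.toContinuousLinearMap.precomp F)) ψ

theorem isometryPullback_apply (V : E →ₗᵢ[ℂ] F) (ψ : WeakDual ℂ (E →L[ℂ] E)) (T : F →L[ℂ] F) :
    isometryPullback V ψ T =
      ψ (V.toContinuousLinearMap.adjoint ∘L T ∘L V.toContinuousLinearMap) :=
  rfl

theorem IsCStarState.isometryPullback {ψ : WeakDual ℂ (E →L[ℂ] E)} (hψ : IsCStarState ψ)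
    (V : E →ₗᵢ[ℂ] F) : IsCStarState (isometryPullback V ψ) := by
  refine .of_contractive ?_ fun T => (hψ.norm_map_le _).trans ?_
  · rw [isometryPullback_apply, ← hψ.1]
    exact congrArg ψ V.adjoint_comp_self
  · have hV := V.norm_toContinuousLinearMap_le
    calc ‖V.toContinuousLinearMap.adjoint ∘L T ∘L V.toContinuousLinearMap‖
      _ ≤ ‖V.toContinuousLinearMap.adjoint‖ * (‖T‖ * ‖V.toContinuousLinearMap‖) :=
        (ContinuousLinearMap.opNorm_comp_le _ _).trans
          (mul_le_mul_of_nonneg_left (ContinuousLinearMap.opNorm_comp_le _ _) (norm_nonneg _))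
      _ ≤ 1 * (‖T‖ * 1) := by
        rw [LinearIsometryEquiv.norm_map]
        gcongr
      _ = ‖T‖ := by rw [one_mul, mul_one]

end VectorStates

section Hulanicki

theorem IsAmenableAction.exists_isCStarState_forall_lreg_eq_one (hG : IsAmenableAction G G) :
    ∃ ψ : WeakDual ℂ (ℓ²(G, ℂ) →L[ℂ] ℓ²(G, ℂ)), IsCStarState ψ ∧ ∀ g, ψ (lreg g) = 1 := by
  classical
  let ev : WeakDual ℂ (ℓ²(G, ℂ) →L[ℂ] ℓ²(G, ℂ)) → G → ℂ := fun ψ g => ψ (lreg g)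
  have hev : Continuous ev := continuous_pi fun g => WeakDual.eval_continuous _
  choose p hp hpF using fun i : Finset G × ℕ =>
    hG.exists_norm_l1Translate_sub_lt i.1 (ε := 1 / ((i.2 : ℝ) + 1)) Nat.one_div_pos_of_nat
  let ψ := fun i => vectorFunctional (sqrtVector ⟨p i, hp i⟩)
  have hclosed := (isCompact_setOf_isCStarState.image hev).isClosed
  have hlim : Filter.Tendsto (fun i => ev (ψ i)) Filter.atTop (nhds 1) := by
    refine tendsto_pi_nhds.2 fun g => tendsto_iff_norm_sub_tendsto_zero.2 ?_
    have hsqrt : Filter.Tendsto (fun i : Finset G × ℕ => √(1 / ((i.2 : ℝ) + 1))) Filter.atTop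
        (nhds 0) := by
      rw [← Real.sqrt_zero, ← Filter.prod_atTop_atTop_eq]
      exact (Real.continuous_sqrt.tendsto 0).comp
        (tendsto_one_div_add_atTop_nhds_zero_nat.comp Filter.tendsto_snd)
    refine squeeze_zero' (Filter.Eventually.of_forall fun i => norm_nonneg _) ?_ hsqrt
    filter_upwards [Filter.eventually_ge_atTop ({g}, 0)] with i hi
    refine (norm_vectorFunctional_sub_one_le (norm_sqrtVector _) (lreg g)).trans ?_
    exact Real.le_sqrt_of_sq_le ((norm_sq_lreg_sqrtVector_sub_le g _).trans
      (hpF i g (hi.1 (Finset.mem_singleton_self g))).le)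
  obtain ⟨ψ₀, hψ₀, h⟩ := hclosed.mem_of_tendsto hlim (Filter.Eventually.of_forall fun i =>
    ⟨ψ i, isCStarState_vectorFunctional (norm_sqrtVector _), rfl⟩)
  exact ⟨ψ₀, hψ₀, congrFun h⟩

end Hulanicki

section Induction

variable {ι κ : Type*}

theorem orthonormal_delta : Orthonormal ℂ (delta (ι := ι)) := by
  classical
  rw [orthonormal_iff_ite]
  intro k h
  rw [inner_delta, delta_apply]

/-- The isometry `ℓ²(κ) → ℓ²(ι)` induced by an injection `κ → ι`. -/
def l2Map (σ : κ → ι) (hσ : Function.Injective σ) : ℓ²(κ, ℂ) →ₗᵢ[ℂ] ℓ²(ι, ℂ) :=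
  (orthonormal_delta.comp σ hσ).orthogonalFamily.linearIsometry

theorem l2Map_delta (σ : κ → ι) (hσ : Function.Injective σ) (k : κ) :
    l2Map σ hσ (delta k) = delta (σ k) := by
  classical
  rw [l2Map, delta, OrthogonalFamily.linearIsometry_apply_single]
  simp

theorem adjoint_comp_comp_l2Map (σ : κ → ι) (hσ : Function.Injective σ)
    {T : ℓ²(ι, ℂ) →L[ℂ] ℓ²(ι, ℂ)} {S : ℓ²(κ, ℂ) →L[ℂ] ℓ²(κ, ℂ)}
    (h : ∀ k, T (delta (σ k)) = l2Map σ hσ (S (delta k))) :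
    (l2Map σ hσ).toContinuousLinearMap.adjoint ∘L T ∘L (l2Map σ hσ).toContinuousLinearMap = S := by
  have hV := (l2Map σ hσ).adjoint_comp_self
  refine eq_of_forall_delta fun k => ?_
  change (l2Map σ hσ).toContinuousLinearMap.adjoint (T (l2Map σ hσ (delta k))) = _
  rw [l2Map_delta, h]
  exact DFunLike.congr_fun hV (S (delta k))

theorem exists_isCStarState_of_isAmenableAction_subgroup {K : Subgroup G}
    (hK : IsAmenableAction K K) :
    ∃ ψ : WeakDual ℂ (ℓ²(G, ℂ) →L[ℂ] ℓ²(G, ℂ)), IsCStarState ψ ∧ (∀ h ∈ K, ψ (lreg h) = 1) ∧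
      ∀ (φ : ℓ^∞(G, ℂ)) (c : ℂ), (∀ h ∈ K, φ h = c) → ψ (diagonal φ) = c := by
  obtain ⟨ψ, hψ, hψK⟩ := hK.exists_isCStarState_forall_lreg_eq_one
  refine ⟨isometryPullback (l2Map _ K.subtype_injective) ψ, hψ.isometryPullback _, fun h hh => ?_,
    fun φ c hφ => ?_⟩
  · rw [isometryPullback_apply, adjoint_comp_comp_l2Map (S := lreg ⟨h, hh⟩), hψK]
    intro k
    rw [lreg_delta, lreg_delta, l2Map_delta]
    rfl
  · rw [isometryPullback_apply, adjoint_comp_comp_l2Map (S := c • 1), map_smul, hψ.1,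
      smul_eq_mul, mul_one]
    intro k
    rw [diagonal_delta, smul_apply, one_apply_eq_self, map_smul, l2Map_delta]
    exact congrArg (· • _) (hφ k k.2)

end Induction

section OrbitRepresentation

variable {Z : Set (WeakDual ℂ (ℓ²(G, ℂ) →L[ℂ] ℓ²(G, ℂ)))} [CompactSpace Z]

/-- The representation of `C(Z)` by restriction of functions to the orbit of `z`. -/
def orbitRep (hZ : ∀ g, Set.MapsTo (conjHom (regularRep (G := G)) g) Z Z) (z : Z) :
    C(Z, ℂ) →⋆ₐ[ℂ] (ℓ²(G, ℂ) →L[ℂ] ℓ²(G, ℂ)) :=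
  diagonal.comp (linftySample fun g => restrictMap (conjHom regularRep g) (hZ g) z)

theorem isCovariant_orbitRep (hZ : ∀ g, Set.MapsTo (conjHom (regularRep (G := G)) g) Z Z)
    (z : Z) : IsCovariant hZ (orbitRep hZ z) := by
  intro g f
  refine (star_lreg_mul_diagonal_mul_lreg g _).trans (congrArg diagonal ?_)
  ext k
  refine congrArg f (Subtype.ext ?_)
  exact DFunLike.congr_fun (map_mul (conjHom regularRep) g k) z.1

/-- The stabilizer of a point under a group of operators. -/
def pointStabilizer {Γ E : Type*} [Group Γ] [AddCommGroup E] [Module ℝ E] [TopologicalSpace E]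
    (T : Γ →* (E →L[ℝ] E)) (x : E) : Subgroup Γ where
  carrier := {g | T g x = x}
  one_mem' := DFunLike.congr_fun (map_one T) x
  mul_mem' {g h} hg hh := by
    rw [Set.mem_ofPred_eq, map_mul, mul_apply_eq_comp, hh, hg]
  inv_mem' {g} hg := by
    have hinv := DFunLike.congr_fun (map_mul T g⁻¹ g) x
    rwa [inv_mul_cancel, map_one, mul_apply_eq_comp, hg, one_apply_eq_self, eq_comm] at hinv

theorem exists_isCStarState_of_stabilizer
    (hZ : ∀ g, Set.MapsTo (conjHom (regularRep (G := G)) g) Z Z) (z : Z) (hz : IsCStarState z.1) :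
    ∃ ψ : WeakDual ℂ (ℓ²(G, ℂ) →L[ℂ] ℓ²(G, ℂ)), IsCStarState ψ ∧
      (∀ g, conjHom regularRep g z.1 = z.1 → ψ (regularRep g) = 1) ∧
      ∀ f, ψ (orbitRep hZ z f) = f z := by
  have hK : IsAmenableAction (pointStabilizer (conjHom regularRep) z.1) G :=
    isAmenableAction_of_conjHom_regularRep_eq hz fun h hh => hh
  obtain ⟨ψ, hψ, hψK, hψφ⟩ := exists_isCStarState_of_isAmenableAction_subgroup hK.subgroup_self
  exact ⟨ψ, hψ, hψK, fun f => hψφ _ _ fun h hh => congrArg f (Subtype.ext hh)⟩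

end OrbitRepresentation

open scoped redCstar in
theorem IsBoundary.map_lreg_eq_zero_of_isCstarSimple (hG : IsCstarSimple G)
    {Z : Set (WeakDual ℂ (ℓ²(G, ℂ) →L[ℂ] ℓ²(G, ℂ)))} (hZ : IsBoundary (conjHom regularRep) Z)
    (hZs : ∀ z ∈ Z, IsCStarState z) {z : WeakDual ℂ (ℓ²(G, ℂ) →L[ℂ] ℓ²(G, ℂ))} (hz : z ∈ Z)
    {s : G} (hs : s ≠ 1) : z (lreg s) = 0 := by
  have : CompactSpace Z := isCompact_iff_compactSpace.1 hZ.isCompact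
  obtain ⟨ψ, hψ, hψv, hψM⟩ := exists_isCStarState_of_stabilizer hZ.mapsTo ⟨z, hz⟩ (hZs z hz)
  exact hZ.map_eq_zero_of_simple (j := (redCstar G).subtype) (u := reducedRep) hZs
    (isCovariant_orbitRep hZ.mapsTo ⟨z, hz⟩) (fun g => coe_uu g) mem_of_forall_uu_mem hG
    isCStarState_tau (fun g hg => (tau_uu g).trans (if_neg hg)) hψ hψv hψM hs

open scoped redCstar in
theorem IsCstarSimple.eq_singleton_tau (hG : IsCstarSimple G) {B : Set (WeakDual ℂ (redCstar G))}
    (hBs : B ⊆ {φ | IsState φ}) (hB : IsDualBoundary G B) : B = {tau G} := by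
  by_contra hne
  obtain ⟨Z, hZ, hZs⟩ := (isDualBoundary_iff.1 hB).exists_isBoundary_dualRestrict_ne
    (u := reducedRep) (j := (redCstar G).subtype) (v := regularRep) Subtype.val_injective
    (fun g => coe_uu g) hBs conjHom_reducedRep_tau hne
  obtain ⟨z, hz⟩ := hZ.nonempty
  refine (hZs z hz).2 (eq_of_forall_uu fun g => ?_)
  rw [dualRestrict_apply, tau_uu]
  split_ifs with hg
  · rw [hg, uu_one, map_one, (hZs z hz).1.1]
  · exact (congrArg z (coe_uu g)).trans
      (hZ.map_lreg_eq_zero_of_isCstarSimple hG (fun z hz => (hZs z hz).1) hz hg)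

/-- A discrete group is C*-simple if and only if the only `G`-boundary contained in the state
space of `C*_λ(G)` is the singleton of the canonical trace. -/
theorem cstarSimple_iff_unique_boundary_in_states (G : Type u) [Group G] :
    IsCstarSimple G ↔
      ∀ B : Set (WeakDual ℂ (redCstar G)),
        B ⊆ {φ | IsState φ} → IsDualBoundary G B → B = {tau G} :=
  ⟨fun hG _ hBs hB => hG.eq_singleton_tau hBs hB, isCstarSimple_of_unique_boundary⟩
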